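/- Let D ⊂ ℝⁿ be a bounded, connected Lipschitz domain and let G be the Dirichlet Green's function on D. If f ∈ L^q(D) with q > n, then the weak solution u = Tf ∈ W^{1,2}_0(D) of Δu = f in D, u = 0 on ∂D, satisfies the pointwise representation u(x) = ∫_D G(x,y) f(y) dy for all x ∈ D. -/

import Mathlib

open MeasureTheory Metric Set Filter Bornology
open scoped ENNReal NNReal Topology RealInnerProductSpace symmDiff

noncomputable section

variable {n : ℕ}

/-- Smooth, compactly supported test functions in an open set `Ω`. -/
def IsTestFun (Ω : Set (EuclideanSpace ℝ (Fin n))) (φ : EuclideanSpace ℝ (Fin n) → ℝ) : Prop :=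
  ContDiff ℝ (⊤ : ℕ∞) φ ∧ HasCompactSupport φ ∧ tsupport φ ⊆ Ω

/-- Membership in the Sobolev space `W^{1,p}(Ω)`: the function and its (a.e. defined)
gradient belong to `L^p(Ω)`. -/
def MemW1p (Ω : Set (EuclideanSpace ℝ (Fin n))) (p : ℝ≥0∞)
    (u : EuclideanSpace ℝ (Fin n) → ℝ) : Prop :=
  MemLp u p (volume.restrict Ω) ∧ MemLp (fun x => gradient u x) p (volume.restrict Ω)

/-- Membership in `W^{1,p}_0(Ω)`: membership in `W^{1,p}(Ω)` together with zero boundary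
trace, expressed as approximability by test functions in the `W^{1,p}` norm. -/
def MemW1p0 (Ω : Set (EuclideanSpace ℝ (Fin n))) (p : ℝ≥0∞)
    (u : EuclideanSpace ℝ (Fin n) → ℝ) : Prop :=
  MemW1p Ω p u ∧ ∃ φ : ℕ → EuclideanSpace ℝ (Fin n) → ℝ,
    (∀ k, IsTestFun Ω (φ k)) ∧
    Tendsto (fun k => eLpNorm (fun x => u x - φ k x) p (volume.restrict Ω)
        + eLpNorm (fun x => gradient u x - gradient (φ k) x) p (volume.restrict Ω))
      atTop (nhds 0)

/-- Membership in `W^{1,2}_0(Ω)`. -/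
def MemW120 (Ω : Set (EuclideanSpace ℝ (Fin n))) (u : EuclideanSpace ℝ (Fin n) → ℝ) : Prop :=
  MemW1p0 Ω 2 u

/-- `Δ u = f` holds weakly in `Ω`:
`∫_Ω ∇u · ∇φ = - ∫_Ω f φ` for all test functions `φ ∈ C_c^∞(Ω)`. -/
def WeakLapEq (Ω : Set (EuclideanSpace ℝ (Fin n))) (f u : EuclideanSpace ℝ (Fin n) → ℝ) : Prop :=
  ∀ φ : EuclideanSpace ℝ (Fin n) → ℝ, IsTestFun Ω φ →
    ∫ x in Ω, ⟪gradient u x, gradient φ x⟫ = - ∫ x in Ω, f x * φ x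

/-- `u = OS(g, ψ)` is the obstacle problem solution in `D` with Laplacian data `g` and
boundary data `ψ`: a nonnegative `W^{1,2}(D)` function with `Δu = χ_{{u>0}} g` weakly in `D`
and `u = ψ` on `∂D` (attained continuously). -/
structure IsObstacleSol (D : Set (EuclideanSpace ℝ (Fin n)))
    (g ψ u : EuclideanSpace ℝ (Fin n) → ℝ) : Prop where
  nonneg : ∀ x ∈ D, 0 ≤ u x
  sobolev : MemW1p D 2 u
  weakEq : WeakLapEq D (Set.indicator {y | 0 < u y} g) u
  contOn : ContinuousOn u (closure D)
  bdry : Set.EqOn u ψ (frontier D)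

/-- The contact set `Λ(u) = {x ∈ D : u(x) = 0}`. -/
def contactSet (D : Set (EuclideanSpace ℝ (Fin n)))
    (u : EuclideanSpace ℝ (Fin n) → ℝ) : Set (EuclideanSpace ℝ (Fin n)) :=
  {x ∈ D | u x = 0}

/-- The non-contact set `Ω(u) = {x ∈ D : u(x) > 0}`. -/
def noncontactSet (D : Set (EuclideanSpace ℝ (Fin n)))
    (u : EuclideanSpace ℝ (Fin n) → ℝ) : Set (EuclideanSpace ℝ (Fin n)) :=
  {x ∈ D | 0 < u x}

/-- `D_{-η} = {x ∈ D : dist(x, ∂D) ≥ η}`. -/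
def innerDomain (D : Set (EuclideanSpace ℝ (Fin n))) (η : ℝ) : Set (EuclideanSpace ℝ (Fin n)) :=
  {x ∈ D | η ≤ infDist x (frontier D)}

/-- A bounded Lipschitz domain: a bounded open set whose boundary is locally, after a rigid
motion, the graph of a Lipschitz function (with the domain lying on one side). -/
def IsLipschitzDomain (D : Set (EuclideanSpace ℝ (Fin n))) : Prop :=
  IsOpen D ∧ IsBounded D ∧
    ∀ x ∈ frontier D,
      ∃ (U : Set (EuclideanSpace ℝ (Fin n)))
        (e : EuclideanSpace ℝ (Fin n) ≃ᵢ EuclideanSpace ℝ (Fin n))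
        (φ : (Fin n → ℝ) → ℝ) (L : ℝ≥0) (j : Fin n),
        x ∈ U ∧ IsOpen U ∧ LipschitzWith L φ ∧
        ∀ y ∈ U, (y ∈ D ↔
          φ (Function.update ((EuclideanSpace.equiv (Fin n) ℝ) (e y)) j 0)
            < (EuclideanSpace.equiv (Fin n) ℝ) (e y) j)

/-- `G` is a Dirichlet Green's function for `D`: for smooth compactly supported right hand
sides, the (continuous representative of the) weak solution of the homogeneous Dirichlet
problem is represented by integration against `G`. -/
def IsGreenFunction (D : Set (EuclideanSpace ℝ (Fin n)))
    (G : EuclideanSpace ℝ (Fin n) → EuclideanSpace ℝ (Fin n) → ℝ) : Prop :=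
  ∀ f, IsTestFun D f → ∀ u, MemW120 D u → WeakLapEq D f u → ContinuousOn u D →
    ∀ x ∈ D, u x = ∫ y in D, G x y * f y

/-- `f` is harmonic on `D`: twice differentiable with vanishing Laplacian at each point. -/
def IsHarmonicOn (f : EuclideanSpace ℝ (Fin n) → ℝ) (D : Set (EuclideanSpace ℝ (Fin n))) : Prop :=
  (∀ x ∈ D, ContDiffAt ℝ 2 f x) ∧
    ∀ x ∈ D, ∑ i : Fin n,
      iteratedFDeriv ℝ 2 f x ![EuclideanSpace.single i 1, EuclideanSpace.single i 1] = 0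

/-- `Ξ` is the harmonic extension of the boundary data `φ` to `D`. -/
def IsHarmonicExtension (D : Set (EuclideanSpace ℝ (Fin n)))
    (φ Ξ : EuclideanSpace ℝ (Fin n) → ℝ) : Prop :=
  ContinuousOn Ξ (closure D) ∧ IsHarmonicOn Ξ D ∧ Set.EqOn Ξ φ (frontier D)

/-- `K` is the Poisson kernel of `D` (with respect to surface measure, i.e. `(n-1)`-dimensional
Hausdorff measure on `∂D`): every harmonic extension of continuous boundary data is recovered
by integrating the boundary data against `K` over `∂D`. -/
def IsPoissonKernel (D : Set (EuclideanSpace ℝ (Fin n)))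
    (K : EuclideanSpace ℝ (Fin n) → EuclideanSpace ℝ (Fin n) → ℝ) : Prop :=
  ∀ φ, ContinuousOn φ (frontier D) → ∀ Ξ, IsHarmonicExtension D φ Ξ →
    ∀ y ∈ D, Ξ y = ∫ x in frontier D, φ x * K y x ∂μH[(n : ℝ) - 1]
/-! ### Calculus of test functions -/

abbrev Eu (n : ℕ) := EuclideanSpace ℝ (Fin n)

/-- Partial derivative. -/
def pd (i : Fin n) (φ : Eu n → ℝ) : Eu n → ℝ :=
  fun x => fderiv ℝ φ x (EuclideanSpace.single i 1)

/-- Laplacian. -/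
def lap (φ : Eu n → ℝ) : Eu n → ℝ := fun x => ∑ i, pd i (pd i φ) x

lemma contDiff_pd {φ : Eu n → ℝ} (h : ContDiff ℝ (⊤ : ℕ∞) φ) (i : Fin n) :
    ContDiff ℝ (⊤ : ℕ∞) (pd i φ) := by
  have : ContDiff ℝ (⊤ : ℕ∞) (fderiv ℝ φ) := h.fderiv_right (by simp)
  exact this.clm_apply contDiff_const

lemma contDiff_lap {φ : Eu n → ℝ} (h : ContDiff ℝ (⊤ : ℕ∞) φ) :
    ContDiff ℝ (⊤ : ℕ∞) (lap φ) := by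
  unfold lap
  exact ContDiff.sum fun i _ => contDiff_pd (contDiff_pd h i) i

lemma contDiff_diff {φ : Eu n → ℝ} (h : ContDiff ℝ (⊤ : ℕ∞) φ) : Differentiable ℝ φ :=
  h.differentiable (by simp)

lemma pd_mul {φ ψ : Eu n → ℝ} {x : Eu n} (i : Fin n) (h : DifferentiableAt ℝ φ x)
    (h' : DifferentiableAt ℝ ψ x) :
    pd i (fun y => φ y * ψ y) x = φ x * pd i ψ x + pd i φ x * ψ x := by
  unfold pd
  rw [fderiv_fun_mul h h']
  simp [mul_comm]

lemma pd_add {φ ψ : Eu n → ℝ} {x : Eu n} (i : Fin n) (h : DifferentiableAt ℝ φ x)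
    (h' : DifferentiableAt ℝ ψ x) :
    pd i (fun y => φ y + ψ y) x = pd i φ x + pd i ψ x := by
  unfold pd
  rw [fderiv_fun_add h h']
  simp

lemma lap_mul {φ ψ : Eu n → ℝ} (h : ContDiff ℝ (⊤ : ℕ∞) φ) (h' : ContDiff ℝ (⊤ : ℕ∞) ψ)
    (x : Eu n) :
    lap (fun y => φ y * ψ y) x
      = φ x * lap ψ x + 2 * ∑ i, pd i φ x * pd i ψ x + lap φ x * ψ x := by
  unfold lap
  rw [Finset.mul_sum, Finset.mul_sum, Finset.sum_mul, ← Finset.sum_add_distrib,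
    ← Finset.sum_add_distrib]
  refine Finset.sum_congr rfl fun i _ => ?_
  have e : pd i (fun y => φ y * ψ y) = fun y => φ y * pd i ψ y + pd i φ y * ψ y := by
    funext y
    exact pd_mul i (contDiff_diff h y) (contDiff_diff h' y)
  have d1 := contDiff_diff h
  have d2 := contDiff_diff h'
  have d3 := contDiff_diff (contDiff_pd h i)
  have d4 := contDiff_diff (contDiff_pd h' i)
  rw [e, pd_add i ((d1 x).fun_mul (d4 x)) ((d3 x).fun_mul (d2 x)), pd_mul i (d1 x) (d4 x),
    pd_mul i (d3 x) (d2 x)]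
  ring

lemma gradient_apply (φ : Eu n → ℝ) (x : Eu n) (i : Fin n) : gradient φ x i = pd i φ x := by
  have h : ⟪gradient φ x, (EuclideanSpace.single i (1:ℝ) : Eu n)⟫ = pd i φ x := by
    unfold gradient pd
    rw [← InnerProductSpace.toDual_apply_apply (𝕜 := ℝ)]
    simp
  rw [EuclideanSpace.inner_single_right] at h
  simpa using h

lemma inner_gradient (φ : Eu n → ℝ) (x V : Eu n) :
    ⟪V, gradient φ x⟫ = ∑ i, V i * pd i φ x := by
  rw [PiLp.inner_apply]
  refine Finset.sum_congr rfl fun i _ => ?_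
  rw [gradient_apply]
  simp [mul_comm]

lemma IsTestFun.pd {Ω : Set (Eu n)} {φ : Eu n → ℝ} (h : IsTestFun Ω φ) (i : Fin n) :
    IsTestFun Ω (pd i φ) :=
  ⟨contDiff_pd h.1 i, h.2.1.fderiv_apply ℝ _, (tsupport_fderiv_apply_subset ℝ _).trans h.2.2⟩

lemma IsTestFun.zero {Ω : Set (Eu n)} : IsTestFun Ω (fun _ => 0) := by
  refine ⟨contDiff_const, HasCompactSupport.zero, ?_⟩
  have : tsupport (fun _ : Eu n => (0:ℝ)) = ∅ := by rw [tsupport_eq_empty_iff]; rfl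
  rw [this]; exact empty_subset _

lemma IsTestFun.add {Ω : Set (Eu n)} {φ ψ : Eu n → ℝ} (h : IsTestFun Ω φ) (h' : IsTestFun Ω ψ) :
    IsTestFun Ω (fun x => φ x + ψ x) :=
  ⟨h.1.add h'.1, h.2.1.add h'.2.1, (tsupport_add φ ψ).trans (union_subset h.2.2 h'.2.2)⟩

lemma IsTestFun.mul {Ω : Set (Eu n)} {φ ψ : Eu n → ℝ} (h : IsTestFun Ω φ)
    (h' : ContDiff ℝ (⊤ : ℕ∞) ψ) :
    IsTestFun Ω (fun x => φ x * ψ x) :=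
  ⟨h.1.mul h', h.2.1.mul_right, (tsupport_mul_subset_left).trans h.2.2⟩

lemma IsTestFun.const_mul {Ω : Set (Eu n)} {φ : Eu n → ℝ} (h : IsTestFun Ω φ) (c : ℝ) :
    IsTestFun Ω (fun x => c * φ x) := by
  have := h.mul (ψ := fun _ => c) contDiff_const
  simpa [mul_comm] using this

lemma IsTestFun.sub {Ω : Set (Eu n)} {φ ψ : Eu n → ℝ} (h : IsTestFun Ω φ) (h' : IsTestFun Ω ψ) :
    IsTestFun Ω (fun x => φ x - ψ x) := by
  have := h.add (h'.const_mul (-1))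
  simpa [sub_eq_add_neg] using this

lemma IsTestFun.sum {Ω : Set (Eu n)} {ι : Type*} (s : Finset ι) {φ : ι → Eu n → ℝ}
    (h : ∀ i ∈ s, IsTestFun Ω (φ i)) : IsTestFun Ω (fun x => ∑ i ∈ s, φ i x) := by
  classical
  induction s using Finset.induction_on with
  | empty => simpa using IsTestFun.zero
  | insert a s ha ih =>
    simp only [Finset.sum_insert ha]
    exact (h a (by simp)).add (ih fun i hi => h i (by simp [hi]))

lemma IsTestFun.lap {Ω : Set (Eu n)} {φ : Eu n → ℝ} (h : IsTestFun Ω φ) :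
    IsTestFun Ω (lap φ) :=
  IsTestFun.sum Finset.univ fun i _ => (h.pd i).pd i

lemma IsTestFun.mono {Ω Ω' : Set (Eu n)} {φ : Eu n → ℝ} (h : IsTestFun Ω φ) (hs : Ω ⊆ Ω') :
    IsTestFun Ω' φ := ⟨h.1, h.2.1, h.2.2.trans hs⟩

lemma IsTestFun.eq_zero {Ω : Set (Eu n)} {φ : Eu n → ℝ} (h : IsTestFun Ω φ) {x : Eu n}
    (hx : x ∉ Ω) : φ x = 0 := by
  by_contra hne
  exact hx (h.2.2 (subset_tsupport φ hne))

lemma IsTestFun.memLp {Ω : Set (Eu n)} {φ : Eu n → ℝ} (h : IsTestFun Ω φ) (p : ℝ≥0∞)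
    (μ : Measure (Eu n)) [IsFiniteMeasureOnCompacts μ] : MemLp φ p μ :=
  h.1.continuous.memLp_of_hasCompactSupport h.2.1

lemma IsTestFun.integrable {Ω : Set (Eu n)} {φ : Eu n → ℝ} (h : IsTestFun Ω φ)
    (μ : Measure (Eu n)) [IsFiniteMeasureOnCompacts μ] : Integrable φ μ :=
  h.1.continuous.integrable_of_hasCompactSupport h.2.1

lemma IsTestFun.diff_add {Ω : Set (Eu n)} {φ ψ : Eu n → ℝ} (h : IsTestFun Ω φ)
    (h' : IsTestFun Ω ψ) (x : Eu n) :
    gradient (fun x => φ x + ψ x) x = gradient φ x + gradient ψ x := by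
  ext i
  rw [PiLp.add_apply, gradient_apply, gradient_apply, gradient_apply,
    pd_add i (contDiff_diff h.1 x) (contDiff_diff h'.1 x)]

lemma IsTestFun.diff_mul {Ω : Set (Eu n)} {φ : Eu n → ℝ} (h : IsTestFun Ω φ)
    (c : ℝ) (x : Eu n) :
    gradient (fun x => c * φ x) x = c • gradient φ x := by
  ext i
  rw [PiLp.smul_apply, gradient_apply, gradient_apply]
  unfold _root_.pd
  rw [fderiv_const_mul (contDiff_diff h.1 x)]
  simp

lemma IsTestFun.diff_sub {Ω : Set (Eu n)} {φ ψ : Eu n → ℝ} (h : IsTestFun Ω φ)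
    (h' : IsTestFun Ω ψ) (x : Eu n) :
    gradient (fun x => φ x - ψ x) x = gradient φ x - gradient ψ x := by
  ext i
  rw [PiLp.sub_apply, gradient_apply, gradient_apply, gradient_apply]
  unfold _root_.pd
  rw [fderiv_fun_sub (contDiff_diff h.1 x) (contDiff_diff h'.1 x)]
  simp

lemma continuous_gradient {φ : Eu n → ℝ} (h : ContDiff ℝ (⊤ : ℕ∞) φ) :
    Continuous (fun x => gradient φ x) := by
  unfold gradient
  exact (LinearIsometryEquiv.continuous _).comp (h.continuous_fderiv (by simp))

lemma IsTestFun.memLp_gradient {Ω : Set (Eu n)} {φ : Eu n → ℝ} (h : IsTestFun Ω φ) (p : ℝ≥0∞)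
    (μ : Measure (Eu n)) [IsFiniteMeasureOnCompacts μ] :
    MemLp (fun x => gradient φ x) p μ := by
  refine (continuous_gradient h.1).memLp_of_hasCompactSupport ?_
  unfold gradient
  exact (h.2.1.fderiv ℝ).comp_left (g := (InnerProductSpace.toDual ℝ (Eu n)).symm) (by simp)

lemma ibp {φ ψ : Eu n → ℝ} (i : Fin n) {Ω : Set (Eu n)} (hψ : IsTestFun Ω ψ)
    (hφ : ContDiff ℝ (⊤ : ℕ∞) φ) :
    ∫ x, φ x * pd i ψ x = - ∫ x, pd i φ x * ψ x := by
  refine integral_mul_fderiv_eq_neg_fderiv_mul_of_integrable ?_ ?_ ?_ ?_ ?_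
  · have := (hψ.mul (contDiff_pd hφ i)).integrable volume
    simpa [mul_comm, pd] using this
  · have := ((hψ.pd i).mul hφ).integrable volume
    simpa [mul_comm, pd] using this
  · have := (hψ.mul hφ).integrable volume
    simpa [mul_comm] using this
  · intro x _; exact contDiff_diff hφ x
  · intro x _; exact contDiff_diff hψ.1 x

lemma IsTestFun.setIntegral {Ω : Set (Eu n)} {φ : Eu n → ℝ} (h : IsTestFun Ω φ)
    (g : Eu n → ℝ) : ∫ x in Ω, g x * φ x = ∫ x, g x * φ x := by
  refine setIntegral_eq_integral_of_forall_compl_eq_zero fun x hx => ?_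
  rw [h.eq_zero hx, mul_zero]

lemma test_green {Ω : Set (Eu n)} {φ ψ : Eu n → ℝ} (hφ : IsTestFun Ω φ) (hψ : IsTestFun Ω ψ) :
    ∫ x in Ω, ⟪gradient φ x, gradient ψ x⟫ = - ∫ x in Ω, φ x * lap ψ x := by
  rw [hψ.lap.setIntegral]
  have e1 : ∫ x in Ω, ⟪gradient φ x, gradient ψ x⟫ = ∫ x, ∑ i, pd i φ x * pd i ψ x := by
    rw [setIntegral_eq_integral_of_forall_compl_eq_zero]
    · refine integral_congr_ae (ae_of_all _ fun x => ?_)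
      simp only [inner_gradient, gradient_apply]
    · intro x hx
      simp only [inner_gradient, gradient_apply]
      refine Finset.sum_eq_zero fun i _ => ?_
      rw [(hψ.pd i).eq_zero hx, mul_zero]
  rw [e1]
  have I1 : ∀ i, Integrable (fun x => pd i φ x * pd i ψ x) := fun i =>
    ((hφ.pd i).mul (contDiff_pd hψ.1 i)).integrable volume
  have I2 : ∀ i, Integrable (fun x => φ x * pd i (pd i ψ) x) := fun i =>
    (hφ.mul (contDiff_pd (contDiff_pd hψ.1 i) i)).integrable volume
  rw [integral_finsetSum _ fun i _ => I1 i]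
  unfold lap
  simp_rw [Finset.mul_sum]
  rw [integral_finsetSum _ fun i _ => I2 i, ← Finset.sum_neg_distrib]
  refine Finset.sum_congr rfl fun i _ => ?_
  rw [ibp i (hψ.pd i) hφ.1, neg_neg]

lemma IsTestFun.weakLapEq {Ω : Set (Eu n)} {φ : Eu n → ℝ} (hφ : IsTestFun Ω φ) :
    WeakLapEq Ω (_root_.lap φ) φ := by
  intro ψ hψ
  have := test_green hψ hφ
  simp_rw [real_inner_comm] at this ⊢
  rw [this]
  congr 1
  refine integral_congr_ae (ae_of_all _ fun x => ?_)
  simp [mul_comm]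

lemma IsTestFun.memW120 {Ω : Set (Eu n)} {φ : Eu n → ℝ} (hφ : IsTestFun Ω φ) :
    MemW120 Ω φ := by
  refine ⟨⟨hφ.memLp 2 _, hφ.memLp_gradient 2 _⟩, fun _ => φ, fun _ => hφ, ?_⟩
  simp

lemma green_test {D : Set (Eu n)} {G : Eu n → Eu n → ℝ} (hG : IsGreenFunction D G)
    {φ : Eu n → ℝ} (hφ : IsTestFun D φ) {x : Eu n} (hx : x ∈ D) :
    φ x = ∫ y, G x y * lap φ y := by
  rw [← hφ.lap.setIntegral]
  exact hG _ hφ.lap φ hφ.memW120 hφ.weakLapEq hφ.1.continuous.continuousOn x hx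
/-! ### The parametrix -/

lemma pd_reflect {Φ : Eu n → ℝ} (hΦ : ContDiff ℝ (⊤ : ℕ∞) Φ) (c : Eu n) (i : Fin n) :
    pd i (fun y => Φ (c - y)) = fun y => - pd i Φ (c - y) := by
  funext y
  unfold pd
  have h1 : HasFDerivAt (fun y : Eu n => c - y) (-ContinuousLinearMap.id ℝ (Eu n)) y :=
    (hasFDerivAt_id y).const_sub c
  have h2 := (contDiff_diff hΦ (c - y)).hasFDerivAt.comp y h1
  have h3 : fderiv ℝ (fun y => Φ (c - y)) y = _ := h2.fderiv
  rw [h3]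
  simp

lemma lap_reflect {Φ : Eu n → ℝ} (hΦ : ContDiff ℝ (⊤ : ℕ∞) Φ) (c y : Eu n) :
    lap (fun y => Φ (c - y)) y = lap Φ (c - y) := by
  unfold lap
  refine Finset.sum_congr rfl fun i _ => ?_
  rw [pd_reflect hΦ]
  have := congrFun (pd_reflect (contDiff_pd hΦ i) c i) y
  unfold pd at this ⊢
  rw [fderiv_fun_neg]
  simp [this]

lemma test_mul_sing {D D' : Set (Eu n)} (hD : IsOpen D) (hD' : D' ⊆ D) {x0 : Eu n}
    {g ψ : Eu n → ℝ}
    (hg : ContDiffOn ℝ (⊤ : ℕ∞) g (D \ {x0})) (hψ : IsTestFun D' ψ)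
    (hz : ψ =ᶠ[𝓝 x0] fun _ => 0) : IsTestFun D' (fun y => g y * ψ y) := by
  refine ⟨?_, hψ.2.1.mul_left, (tsupport_mul_subset_right).trans hψ.2.2⟩
  rw [contDiff_iff_contDiffAt]
  intro y
  by_cases hy : y = x0
  · subst hy
    refine (contDiffAt_const (c := (0:ℝ))).congr_of_eventuallyEq ?_
    filter_upwards [hz] with z hz
    simp [hz]
  · by_cases hyD : y ∈ D
    · have : D \ {x0} ∈ 𝓝 y := (hD.sdiff isClosed_singleton).mem_nhds ⟨hyD, hy⟩
      exact (hg.contDiffAt this).mul hψ.1.contDiffAt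
    · have hy' : y ∉ tsupport ψ := fun h => hyD (hD' (hψ.2.2 h))
      refine (contDiffAt_const (c := (0:ℝ))).congr_of_eventuallyEq ?_
      filter_upwards [notMem_tsupport_iff_eventuallyEq.1 hy'] with z hz
      simp [hz]

lemma pd_eventually_zero {φ : Eu n → ℝ} {x0 : Eu n} {c : ℝ} (h : φ =ᶠ[𝓝 x0] fun _ => c)
    (i : Fin n) : pd i φ =ᶠ[𝓝 x0] fun _ => 0 := by
  filter_upwards [h.fderiv (𝕜 := ℝ)] with y hy
  unfold pd
  rw [hy]
  simp

lemma lap_eventually_zero {φ : Eu n → ℝ} {x0 : Eu n} {c : ℝ} (h : φ =ᶠ[𝓝 x0] fun _ => c) :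
    lap φ =ᶠ[𝓝 x0] fun _ => 0 := by
  have : ∀ᶠ y in 𝓝 x0, ∀ i, pd i (pd i φ) y = 0 :=
    eventually_all.2 fun i => pd_eventually_zero (pd_eventually_zero h i) i
  filter_upwards [this] with y hy
  unfold lap
  exact Finset.sum_eq_zero fun i _ => hy i

lemma IsTestFun.translate {Ω : Set (Eu n)} {φ : Eu n → ℝ} (h : IsTestFun Ω φ) (x0 : Eu n) :
    IsTestFun univ (fun t => φ (x0 + t)) :=
  ⟨h.1.comp (contDiff_const.add contDiff_id),
    h.2.1.comp_homeomorph (Homeomorph.addLeft x0), subset_univ _⟩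

theorem exists_parametrix {D : Set (Eu n)} (hD : IsOpen D) {x0 : Eu n} (hx0 : x0 ∈ D)
    {g : Eu n → ℝ} (hgG : ∀ φ, IsTestFun D φ → φ x0 = ∫ y, g y * lap φ y)
    {p : ℝ≥0∞}
    (hg1 : MemLp g 1 (volume.restrict D)) (hgp : MemLp g p (volume.restrict D))
    (hgs : ContDiffOn ℝ (⊤ : ℕ∞) g (D \ {x0})) {δ : ℝ} (hδ : 0 < δ) :
    ∃ E R : Eu n → ℝ, MemLp E 1 volume ∧ MemLp E p volume ∧ (∀ t, δ ≤ ‖t‖ → E t = 0) ∧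
      IsTestFun univ R ∧ (∀ t, δ ≤ ‖t‖ → R t = 0) ∧
      ∀ Φ : Eu n → ℝ, ContDiff ℝ (⊤ : ℕ∞) Φ → ∀ y,
        ∫ t, E t * lap Φ (y - t) = Φ y + ∫ t, R t * Φ (y - t) := by
  set D' := D ∩ ball x0 δ with hD'
  have hD'D : D' ⊆ D := inter_subset_left
  have hx0' : D' ∈ 𝓝 x0 := (hD.inter isOpen_ball).mem_nhds ⟨hx0, mem_ball_self hδ⟩
  obtain ⟨r, hr, hrD⟩ := Metric.nhds_basis_closedBall.mem_iff.1 hx0'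
  let B : ContDiffBump x0 := ⟨r / 2, r, by positivity, by linarith⟩
  set η : Eu n → ℝ := fun y => B y with hη
  have hηt : IsTestFun D' η := by
    refine ⟨B.contDiff, B.hasCompactSupport, ?_⟩
    rw [hη, B.tsupport_eq]
    exact hrD
  have hη1 : η =ᶠ[𝓝 x0] fun _ => 1 := B.eventuallyEq_one
  have hη_le : ∀ y, |η y| ≤ 1 := fun y => abs_le.2 ⟨by linarith [B.nonneg' y], B.le_one⟩
  set h : Fin n → Eu n → ℝ := fun i y => g y * pd i η y with hh
  have hht : ∀ i, IsTestFun D' (h i) := fun i =>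
    test_mul_sing hD hD'D hgs (hηt.pd i) (pd_eventually_zero hη1 i)
  set k : Eu n → ℝ := fun y => g y * lap η y with hk
  have hkt : IsTestFun D' k := test_mul_sing hD hD'D hgs hηt.lap (lap_eventually_zero hη1)
  set r : Eu n → ℝ := fun y => 2 * ∑ i, pd i (h i) y - k y with hr
  have hrt : IsTestFun D' r :=
    ((IsTestFun.sum Finset.univ fun i _ => (hht i).pd i).const_mul 2).sub hkt
  set e : Eu n → ℝ := fun y => η y * g y with he
  have hep : ∀ {s : ℝ≥0∞}, MemLp g s (volume.restrict D) → MemLp e s volume := by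
    intro s hs
    have h1 : MemLp e s (volume.restrict D) := by
      refine hs.of_le (hηt.1.continuous.aestronglyMeasurable.mul hs.1) (ae_of_all _ fun y => ?_)
      rw [he]
      simp only [norm_mul, Real.norm_eq_abs]
      nlinarith [hη_le y, abs_nonneg (g y)]
    rw [← memLp_indicator_iff_restrict hD.measurableSet] at h1
    have : D.indicator e = e := by
      rw [indicator_eq_self]
      intro y hy
      by_contra hyD
      exact hy (by simp [he, hηt.eq_zero (fun h => hyD (hD'D h))])
    rwa [this] at h1
  -- basic identity
  have key : ∀ φ : Eu n → ℝ, ContDiff ℝ (⊤ : ℕ∞) φ →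
      ∫ y, e y * lap φ y = φ x0 + ∫ y, r y * φ y := by
    intro φ hφ
    have h0 := hgG _ ((hηt.mul hφ).mono hD'D)
    have hηx0 : η x0 = 1 := hη1.self_of_nhds
    simp only [hηx0, one_mul] at h0
    have e1 : ∀ y, g y * lap (fun y => η y * φ y) y
        = e y * lap φ y + (2 * ∑ i, h i y * pd i φ y + k y * φ y) := by
      intro y
      rw [lap_mul hηt.1 hφ]
      simp only [he, hh, hk, Finset.mul_sum, mul_add]
      rw [add_assoc]
      congr 1
      · ring
      · congr 1
        · refine Finset.sum_congr rfl fun i _ => by ring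
        · ring
    simp_rw [e1] at h0
    have Ih : ∀ i, Integrable (fun y => h i y * pd i φ y) := fun i =>
      ((hht i).mul (contDiff_pd hφ i)).integrable volume
    have Ih' : ∀ i, Integrable (fun y => pd i (h i) y * φ y) := fun i =>
      (((hht i).pd i).mul hφ).integrable volume
    have Ik : Integrable (fun y => k y * φ y) := (hkt.mul hφ).integrable volume
    have Ie : Integrable (fun y => e y * lap φ y) := by
      have t1 : IsTestFun D' (fun y => η y * lap φ y) := hηt.mul (contDiff_lap hφ)
      obtain ⟨C, hC⟩ := t1.2.1.exists_bound_of_continuous t1.1.continuous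
      have : Integrable (fun y => g y * (η y * lap φ y)) (volume.restrict D) := by
        refine (memLp_one_iff_integrable.1 hg1).mul_bdd (c := C)
          t1.1.continuous.aestronglyMeasurable (ae_of_all _ hC)
      have h2 : IntegrableOn (fun y => g y * (η y * lap φ y)) D volume := this
      rw [← integrable_indicator_iff hD.measurableSet] at h2
      refine h2.congr (ae_of_all _ fun y => ?_)
      by_cases hy : y ∈ D
      · simp [hy, he]; ring
      · simp [hy, he, hηt.eq_zero (fun h => hy (hD'D h))]
    have Is : Integrable (fun y => 2 * ∑ i, h i y * pd i φ y + k y * φ y) :=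
      ((integrable_finsetSum _ fun i _ => Ih i).const_mul 2).add Ik
    rw [integral_add Ie Is,
      integral_add ((integrable_finsetSum _ fun i _ => Ih i).const_mul 2) Ik,
      integral_const_mul, integral_finsetSum _ fun i _ => Ih i] at h0
    have e2 : ∀ i, ∫ y, h i y * pd i φ y = - ∫ y, pd i (h i) y * φ y := by
      intro i
      have := ibp i (hht i) hφ
      simp_rw [mul_comm (h i _), mul_comm (pd i (h i) _)]
      linarith
    simp_rw [e2] at h0
    have e3 : ∫ y, r y * φ y = 2 * (∑ i, ∫ y, pd i (h i) y * φ y) - ∫ y, k y * φ y := by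
      rw [← integral_finsetSum _ fun i _ => Ih' i, ← integral_const_mul,
        ← integral_sub ((integrable_finsetSum _ fun i _ => Ih' i).const_mul 2) Ik]
      refine integral_congr_ae (ae_of_all _ fun y => ?_)
      simp only [hr, sub_mul, mul_assoc, Finset.sum_mul]
    rw [e3, h0, Finset.sum_neg_distrib]
    ring
  refine ⟨fun t => e (x0 + t), fun t => r (x0 + t), ?_, ?_, ?_, hrt.translate x0, ?_, ?_⟩
  · exact (hep hg1).comp_measurePreserving (measurePreserving_add_left volume x0)
  · exact (hep hgp).comp_measurePreserving (measurePreserving_add_left volume x0)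
  · intro t ht
    have : x0 + t ∉ D' := fun h => by
      have := h.2
      simp [mem_ball, dist_eq_norm] at this
      linarith
    simp [he, hηt.eq_zero this]
  · intro t ht
    have : x0 + t ∉ D' := fun h => by
      have := h.2
      simp [mem_ball, dist_eq_norm] at this
      linarith
    exact hrt.eq_zero this
  · intro Φ hΦ y
    have h1 := key (fun z => Φ ((y + x0) - z)) (hΦ.comp (contDiff_const.sub contDiff_id))
    simp_rw [lap_reflect hΦ] at h1
    rw [← integral_add_left_eq_self (fun z => e z * lap Φ (y + x0 - z)) x0,
      ← integral_add_left_eq_self (fun z => r z * Φ (y + x0 - z)) x0] at h1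
    have ee : ∀ t, y + x0 - (x0 + t) = y - t := fun t => by abel
    simp only [ee, add_sub_cancel_right] at h1
    exact h1
/-! ### Convolutions and the local representation formula -/

/-- Convolution of two real functions. -/
def cv (E ψ : Eu n → ℝ) : Eu n → ℝ := fun y => ∫ t, E t * ψ (y - t)

lemma cv_eq (E ψ : Eu n → ℝ) :
    cv E ψ = convolution E ψ (ContinuousLinearMap.mul ℝ ℝ) volume := rfl

lemma cv_contDiff {E ψ : Eu n → ℝ} (hE : Integrable E) {Ω : Set (Eu n)} (hψ : IsTestFun Ω ψ) :
    ContDiff ℝ (⊤ : ℕ∞) (cv E ψ) :=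
  hψ.2.1.contDiff_convolution_right (ContinuousLinearMap.mul ℝ ℝ) hE.locallyIntegrable hψ.1

lemma pd_cv {E ψ : Eu n → ℝ} (hE : Integrable E) {Ω : Set (Eu n)} (hψ : IsTestFun Ω ψ)
    (i : Fin n) : pd i (cv E ψ) = cv E (pd i ψ) := by
  funext y
  have h := hψ.2.1.hasFDerivAt_convolution_right (ContinuousLinearMap.mul ℝ ℝ)
    hE.locallyIntegrable (hψ.1.of_le (by simp)) y
  unfold pd
  rw [cv_eq, h.fderiv, convolution_precompR_apply _ hE.locallyIntegrable (hψ.2.1.fderiv ℝ)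
    (hψ.1.continuous_fderiv (by simp))]
  rfl

lemma cv_integrand {E ψ : Eu n → ℝ} (hE : Integrable E) {Ω : Set (Eu n)} (hψ : IsTestFun Ω ψ)
    (y : Eu n) : Integrable (fun t => E t * ψ (y - t)) :=
  hψ.2.1.convolutionExists_right (ContinuousLinearMap.mul ℝ ℝ) hE.locallyIntegrable
    hψ.1.continuous y

lemma lap_cv {E ψ : Eu n → ℝ} (hE : Integrable E) {Ω : Set (Eu n)} (hψ : IsTestFun Ω ψ) :
    lap (cv E ψ) = cv E (lap ψ) := by
  funext y
  unfold lap
  simp_rw [pd_cv hE hψ, pd_cv hE (hψ.pd _)]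
  unfold cv
  rw [← integral_finsetSum _ fun i _ => cv_integrand hE ((hψ.pd i).pd i) y]
  simp_rw [Finset.mul_sum]

lemma cv_test {E ψ : Eu n → ℝ} (hE : Integrable E) {x : Eu n} {δ : ℝ} (hδ : 0 < δ)
    {D : Set (Eu n)} (hxD : ball x (3 * δ) ⊆ D) (hEs : ∀ t, δ ≤ ‖t‖ → E t = 0)
    (hψ : IsTestFun (ball x δ) ψ) : IsTestFun D (cv E ψ) := by
  have h0 : Function.support (cv E ψ) ⊆ closedBall x (2 * δ) := by
    intro y hy
    by_contra hyb
    apply hy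
    unfold cv
    rw [integral_eq_zero_of_ae]
    refine ae_of_all _ fun t => ?_
    by_cases ht : δ ≤ ‖t‖
    · simp [hEs t ht]
    · have : y - t ∉ ball x δ := by
        intro hm
        apply hyb
        rw [mem_ball, dist_eq_norm] at hm
        rw [mem_closedBall, dist_eq_norm]
        calc ‖y - x‖ = ‖(y - t - x) + t‖ := by congr 1; abel
          _ ≤ ‖y - t - x‖ + ‖t‖ := norm_add_le _ _
          _ ≤ 2 * δ := by linarith [not_le.1 ht]
      simp [hψ.eq_zero this]
  have h1 : tsupport (cv E ψ) ⊆ closedBall x (2 * δ) := closure_minimal h0 isClosed_closedBall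
  refine ⟨cv_contDiff hE hψ, (isCompact_closedBall x (2 * δ)).of_isClosed_subset
    (isClosed_tsupport _) h1, h1.trans ?_⟩
  exact (closedBall_subset_ball (by linarith)).trans hxD

lemma fubini_integrable {g E : Eu n → ℝ} (hg : Integrable g) (hE : Integrable E) :
    Integrable (fun p : Eu n × Eu n => g p.2 * E (p.2 - p.1)) (volume.prod volume) := by
  have := Integrable.convolution_integrand (μ := (volume : Measure (Eu n)))
    (ν := (volume : Measure (Eu n))) (ContinuousLinearMap.mul ℝ ℝ) hg hE.comp_neg
  simpa using this

lemma fubini_cv {g E ψ : Eu n → ℝ} (hg : Integrable g) (hE : Integrable E)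
    {Ω : Set (Eu n)} (hψ : IsTestFun Ω ψ) :
    ∫ y, g y * cv E ψ y = ∫ s, ψ s * ∫ y, g y * E (y - s) := by
  obtain ⟨C, hC⟩ := hψ.2.1.exists_bound_of_continuous hψ.1.continuous
  have I : Integrable (fun p : Eu n × Eu n => ψ p.1 * (g p.2 * E (p.2 - p.1)))
      (volume.prod volume) :=
    (fubini_integrable hg hE).bdd_mul (c := C)
      (hψ.1.continuous.comp continuous_fst).aestronglyMeasurable (ae_of_all _ fun p => hC p.1)
  simp_rw [← integral_const_mul]
  rw [integral_integral_swap I]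
  refine integral_congr_ae (ae_of_all _ fun y => ?_)
  simp only
  unfold cv
  rw [← integral_sub_left_eq_self _ volume y, ← integral_const_mul]
  refine integral_congr_ae (ae_of_all _ fun s => ?_)
  simp only [sub_sub_cancel]
  ring

/-- The properties of a parametrix used below. -/
structure IsParam (δ : ℝ) (E R : Eu n → ℝ) : Prop where
  int : Integrable E
  suppE : ∀ t, δ ≤ ‖t‖ → E t = 0
  testR : IsTestFun univ R
  suppR : ∀ t, δ ≤ ‖t‖ → R t = 0
  eq : ∀ Φ : Eu n → ℝ, ContDiff ℝ (⊤ : ℕ∞) Φ → ∀ y,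
        ∫ t, E t * lap Φ (y - t) = Φ y + ∫ t, R t * Φ (y - t)

theorem local_formula {D : Set (Eu n)} {δ : ℝ} (hδ : 0 < δ) {E R : Eu n → ℝ}
    (hP : IsParam δ E R) {v g : Eu n → ℝ} (hv : Integrable v) (hg : Integrable g)
    (hvw : ∀ φ, IsTestFun D φ → ∫ y, v y * lap φ y = ∫ y, g y * φ y)
    {x : Eu n} (hx : ball x (3 * δ) ⊆ D) :
    ∀ᵐ s, s ∈ ball x δ → v s = (∫ y, g y * E (y - s)) - ∫ y, v y * R (y - s) := by
  have hR := hP.testR.integrable volume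
  have IF : Integrable (fun s => ∫ y, g y * E (y - s)) :=
    (fubini_integrable hg hP.int).integral_prod_left
  have IH : Integrable (fun s => ∫ y, v y * R (y - s)) :=
    (fubini_integrable hv hR).integral_prod_left
  have key := isOpen_ball.ae_eq_zero_of_integral_contDiff_smul_eq_zero (U := ball x δ)
    (μ := volume) (f := fun s => v s - ((∫ y, g y * E (y - s)) - ∫ y, v y * R (y - s)))
    ((hv.sub (IF.sub IH)).locallyIntegrable.locallyIntegrableOn _) ?_
  · filter_upwards [key] with s hs hsb
    linarith [hs hsb]
  intro ψ h1 h2 h3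
  have hψ : IsTestFun (ball x δ) ψ := ⟨h1, h2, h3⟩
  obtain ⟨C, hC⟩ := hψ.2.1.exists_bound_of_continuous hψ.1.continuous
  have bm : ∀ {k : Eu n → ℝ}, Integrable k → Integrable (fun s => ψ s * k s) := fun hk =>
    hk.bdd_mul (c := C) h1.continuous.aestronglyMeasurable (ae_of_all _ hC)
  have h4 := hvw _ (cv_test hP.int hδ hx hP.suppE hψ)
  rw [lap_cv hP.int hψ, fubini_cv hg hP.int hψ] at h4
  have h5 : cv E (lap ψ) = fun y => ψ y + cv R ψ y := by
    funext y; exact hP.eq ψ h1 y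
  rw [h5] at h4
  have tR : IsTestFun D (cv R ψ) := cv_test hR hδ hx hP.suppR hψ
  obtain ⟨C', hC'⟩ := tR.2.1.exists_bound_of_continuous tR.1.continuous
  have J : Integrable (fun y => v y * cv R ψ y) :=
    hv.mul_bdd (c := C') tR.1.continuous.aestronglyMeasurable (ae_of_all _ hC')
  have J' : Integrable (fun y => v y * ψ y) := by
    simpa [mul_comm] using bm hv
  simp_rw [mul_add] at h4
  rw [integral_add J' J, fubini_cv hv hR hψ] at h4
  simp only [smul_eq_mul, mul_sub]
  have hh : Integrable (fun s => (ψ s * ∫ y, g y * E (y - s)) - ψ s * ∫ y, v y * R (y - s)) :=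
    (bm IF).sub (bm IH)
  rw [integral_sub (bm hv) hh, integral_sub (bm IF) (bm IH)]
  simp_rw [mul_comm (ψ _) (v _)]
  linarith

/-- Local smoothness when the data are smooth. -/
theorem local_smooth {D : Set (Eu n)} {δ : ℝ} (hδ : 0 < δ) {E R : Eu n → ℝ}
    (hP : IsParam δ E R) {v g : Eu n → ℝ} (hv : Integrable v) {Ω : Set (Eu n)}
    (hg : IsTestFun Ω g)
    (hvw : ∀ φ, IsTestFun D φ → ∫ y, v y * lap φ y = ∫ y, g y * φ y)
    {x : Eu n} (hx : ball x (3 * δ) ⊆ D) :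
    ∃ h : Eu n → ℝ, ContDiff ℝ (⊤ : ℕ∞) h ∧ ∀ᵐ s, s ∈ ball x δ → v s = h s := by
  refine ⟨_, ?_, local_formula hδ hP hv (hg.integrable volume) hvw hx⟩
  have e1 : (fun s => ∫ y, g y * E (y - s)) = cv (fun t => E (-t)) g := by
    funext s
    unfold cv
    rw [← integral_sub_left_eq_self (fun y => g y * E (y - s)) volume s]
    refine integral_congr_ae (ae_of_all _ fun t => ?_)
    simp [mul_comm]
  have e2 : (fun s => ∫ y, v y * R (y - s)) = cv v (fun t => R (-t)) := by
    funext s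
    unfold cv
    simp
  have tR : IsTestFun univ (fun t => R (-t)) :=
    ⟨hP.testR.1.comp contDiff_neg, hP.testR.2.1.comp_homeomorph (Homeomorph.neg _),
      subset_univ _⟩
  refine ContDiff.sub ?_ ?_
  · rw [e1]; exact cv_contDiff hP.int.comp_neg hg
  · rw [e2]; exact cv_contDiff hv tR

lemma holder_abs {p q : ℝ≥0∞} [ENNReal.HolderConjugate p q] {μ : Measure (Eu n)}
    {f g : Eu n → ℝ} (hf : MemLp f p μ) (hg : MemLp g q μ) :
    ENNReal.ofReal |∫ y, f y * g y ∂μ| ≤ eLpNorm f p μ * eLpNorm g q μ := by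
  have h1 : ENNReal.ofReal |∫ y, f y * g y ∂μ| ≤ ∫⁻ y, ‖f y * g y‖ₑ ∂μ := by
    rw [← Real.enorm_eq_ofReal_abs]
    exact enorm_integral_le_lintegral_enorm _
  refine h1.trans ?_
  have h2 := eLpNorm_smul_le_mul_eLpNorm (p := p) (q := q) (r := 1) hg.1 hf.1
  rw [eLpNorm_one_eq_lintegral_enorm] at h2
  exact h2

/-- Local boundedness. -/
theorem local_bound {D : Set (Eu n)} {δ : ℝ} (hδ : 0 < δ) {E R : Eu n → ℝ}
    (hP : IsParam δ E R) {p q : ℝ≥0∞} [ENNReal.HolderConjugate p q] (hEp : MemLp E p)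
    {v g : Eu n → ℝ} (hv : Integrable v) (hv2 : MemLp v 2)
    (hg : Integrable g) (hgq : MemLp g q)
    (hvw : ∀ φ, IsTestFun D φ → ∫ y, v y * lap φ y = ∫ y, g y * φ y)
    {x : Eu n} (hx : ball x (3 * δ) ⊆ D) (hvc : ContinuousOn v D) :
    ENNReal.ofReal |v x| ≤ eLpNorm E p volume * eLpNorm g q volume
      + eLpNorm v 2 volume * eLpNorm R 2 volume := by
  set C := eLpNorm E p volume * eLpNorm g q volume
      + eLpNorm v 2 volume * eLpNorm R 2 volume with hC
  have hR2 := hP.testR.memLp 2 volume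
  have h1 : ∀ᵐ s, s ∈ ball x δ → ENNReal.ofReal |v s| ≤ C := by
    filter_upwards [local_formula hδ hP hv hg hvw hx] with s hs hsb
    rw [hs hsb]
    have mp : MeasurePreserving (fun y : Eu n => y - s) volume volume :=
      measurePreserving_sub_right volume s
    have a1 := holder_abs (p := p) (q := q) (hEp.comp_measurePreserving mp) hgq
    have a2 := holder_abs (p := 2) (q := 2) hv2 (hR2.comp_measurePreserving mp)
    rw [eLpNorm_comp_measurePreserving hEp.1 mp] at a1
    rw [eLpNorm_comp_measurePreserving hR2.1 mp] at a2
    simp only [Function.comp_apply] at a1 a2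
    simp_rw [mul_comm (E _)] at a1
    refine le_trans ?_ (add_le_add a1 a2)
    rw [← ENNReal.ofReal_add (abs_nonneg _) (abs_nonneg _)]
    exact ENNReal.ofReal_le_ofReal (abs_sub _ _)
  by_contra hlt
  push Not at hlt
  have hxD : x ∈ D := hx (mem_ball_self (by linarith))
  have hDn : D ∈ 𝓝 x := mem_of_superset (ball_mem_nhds x (by linarith)) hx
  have hc : ContinuousAt (fun s => ENNReal.ofReal |v s|) x :=
    (ENNReal.continuous_ofReal.comp continuous_abs).continuousAt.comp (hvc.continuousAt hDn)
  have h2 : ∀ᶠ s in 𝓝 x, C < ENNReal.ofReal |v s| ∧ s ∈ ball x δ :=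
    (hc.eventually (lt_mem_nhds hlt)).and (ball_mem_nhds x hδ)
  obtain ⟨U, hU, hUo, hxU⟩ := _root_.eventually_nhds_iff.1 h2
  have h3 : volume U = 0 := by
    refine measure_mono_null ?_ h1
    intro s hs hcon
    exact absurd (hcon (hU s hs).2) (not_le.2 (hU s hs).1)
  exact (hUo.measure_pos volume ⟨x, hxU⟩).ne' h3

/-- The ambient Hilbert space. -/
abbrev WW (D : Set (Eu n)) : Type :=
  WithLp 2 (Lp ℝ 2 (volume.restrict D) × Lp (Eu n) 2 (volume.restrict D))

/-- A pair of functions as an element of the ambient Hilbert space. -/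
def mkW {D : Set (Eu n)} {v : Eu n → ℝ} {V : Eu n → Eu n} (hv : MemLp v 2 (volume.restrict D))
    (hV : MemLp V 2 (volume.restrict D)) : WW D :=
  WithLp.toLp 2 (hv.toLp v, hV.toLp V)

lemma mkW_congr {D : Set (Eu n)} {v v' : Eu n → ℝ} {V V' : Eu n → Eu n}
    (hv : MemLp v 2 (volume.restrict D)) (hV : MemLp V 2 (volume.restrict D))
    (hv' : MemLp v' 2 (volume.restrict D)) (hV' : MemLp V' 2 (volume.restrict D))
    (h1 : v =ᵐ[volume.restrict D] v') (h2 : V =ᵐ[volume.restrict D] V') :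
    mkW hv hV = mkW hv' hV' := by
  unfold mkW
  rw [MemLp.toLp_congr hv hv' h1, MemLp.toLp_congr hV hV' h2]

/-- test function graph. -/
def testW {D : Set (Eu n)} {φ : Eu n → ℝ} (h : IsTestFun D φ) : WW D :=
  mkW (h.memLp 2 (volume.restrict D)) (h.memLp_gradient 2 (volume.restrict D))

/-- The space of graphs of test functions. -/
def SW (D : Set (Eu n)) : Submodule ℝ (WW D) where
  carrier := {z | ∃ (φ : Eu n → ℝ) (h : IsTestFun D φ), z = testW h}
  zero_mem' := by
    refine ⟨_, IsTestFun.zero, ?_⟩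
    have e : (fun x => gradient (fun _ : Eu n => (0:ℝ)) x) = fun _ => (0 : Eu n) := by
      funext x
      unfold gradient
      simp
    unfold testW
    refine Eq.trans ?_ (mkW_congr (v := 0) (V := 0) MemLp.zero' MemLp.zero' _ _ (by rfl)
      (by rw [e]; rfl))
    rfl
  add_mem' := by
    rintro _ _ ⟨φ, h, rfl⟩ ⟨ψ, h', rfl⟩
    refine ⟨_, h.add h', ?_⟩
    unfold testW
    refine Eq.trans ?_ (mkW_congr ((h.memLp 2 _).add (h'.memLp 2 _))
      ((h.memLp_gradient 2 _).add (h'.memLp_gradient 2 _)) _ _ (by rfl)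
      (ae_of_all _ fun x => (h.diff_add h' x).symm))
    rfl
  smul_mem' := by
    rintro c _ ⟨φ, h, rfl⟩
    refine ⟨_, h.const_mul c, ?_⟩
    unfold testW
    refine Eq.trans ?_ (mkW_congr ((h.memLp 2 _).const_smul c)
      ((h.memLp_gradient 2 _).const_smul c) _ _ (by rfl)
      (ae_of_all _ fun x => (h.diff_mul c x).symm))
    rfl

/-- The Sobolev space with zero trace as a closed subspace. -/
def KW (D : Set (Eu n)) : Submodule ℝ (WW D) := (SW D).topologicalClosure

instance instCompleteKW (D : Set (Eu n)) : CompleteSpace (KW D) :=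
  (Submodule.isClosed_topologicalClosure _).completeSpace_coe

lemma testW_mem {D : Set (Eu n)} {φ : Eu n → ℝ} (h : IsTestFun D φ) : testW h ∈ KW D :=
  Submodule.le_topologicalClosure _ ⟨φ, h, rfl⟩

/-- Closed conditions propagate from test functions. -/
lemma KW_induction {D : Set (Eu n)} {P : WW D → Prop} (hP : IsClosed {z | P z})
    (h : ∀ φ (h : IsTestFun D φ), P (testW h)) {z : WW D} (hz : z ∈ KW D) : P z := by
  have : (SW D : Set (WW D)) ⊆ {z | P z} := by
    rintro _ ⟨φ, hφ, rfl⟩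
    exact h φ hφ
  exact closure_minimal this hP hz

lemma inner_toLp {E : Type*} [NormedAddCommGroup E] [InnerProductSpace ℝ E] {D : Set (Eu n)}
    {f g : Eu n → E} (hf : MemLp f 2 (volume.restrict D))
    (hg : MemLp g 2 (volume.restrict D)) :
    ⟪hf.toLp f, hg.toLp g⟫ = ∫ x in D, ⟪f x, g x⟫ := by
  rw [L2.inner_def]
  refine integral_congr_ae ?_
  filter_upwards [hf.coeFn_toLp, hg.coeFn_toLp] with x h1 h2
  rw [h1, h2]

lemma memW120_iff {D : Set (Eu n)} {u : Eu n → ℝ} :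
    MemW120 D u ↔ ∃ (hu : MemLp u 2 (volume.restrict D))
      (hU : MemLp (fun x => gradient u x) 2 (volume.restrict D)), mkW hu hU ∈ KW D := by
  have key : ∀ (hu : MemLp u 2 (volume.restrict D))
      (hU : MemLp (fun x => gradient u x) 2 (volume.restrict D)) (φ : ℕ → Eu n → ℝ)
      (hφ : ∀ k, IsTestFun D (φ k)),
      Tendsto (fun k => eLpNorm (fun x => u x - φ k x) 2 (volume.restrict D)
        + eLpNorm (fun x => gradient u x - gradient (φ k) x) 2 (volume.restrict D))
      atTop (nhds 0) ↔ Tendsto (fun k => testW (hφ k)) atTop (𝓝 (mkW hu hU)) := by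
    intro hu hU φ hφ
    have e1 : ∀ k, eLpNorm (fun x => u x - φ k x) 2 (volume.restrict D)
        = edist ((hφ k).memLp 2 (volume.restrict D)).toLp (hu.toLp u) := by
      intro k
      rw [edist_comm, Lp.edist_toLp_toLp]
      rfl
    have e2 : ∀ k, eLpNorm (fun x => gradient u x - gradient (φ k) x) 2 (volume.restrict D)
        = edist ((hφ k).memLp_gradient 2 (volume.restrict D)).toLp (hU.toLp _) := by
      intro k
      rw [edist_comm, Lp.edist_toLp_toLp]
      rfl
    simp_rw [e1, e2]
    have e3 : Tendsto (fun k => testW (hφ k)) atTop (𝓝 (mkW hu hU)) ↔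
        Tendsto (fun k => (((hφ k).memLp 2 (volume.restrict D)).toLp,
          ((hφ k).memLp_gradient 2 (volume.restrict D)).toLp)) atTop
          (𝓝 (hu.toLp u, hU.toLp _)) := by
      constructor
      · intro h
        exact ((WithLp.prod_continuous_ofLp 2 _ _).tendsto _).comp h
      · intro h
        exact ((WithLp.prod_continuous_toLp 2 _ _).tendsto _).comp h
    rw [e3, nhds_prod_eq, Filter.tendsto_prod_iff']
    constructor
    · intro h
      constructor
      · rw [tendsto_iff_edist_tendsto_0]
        exact tendsto_of_tendsto_of_tendsto_of_le_of_le tendsto_const_nhds h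
          (fun _ => zero_le) (fun _ => le_self_add)
      · rw [tendsto_iff_edist_tendsto_0]
        exact tendsto_of_tendsto_of_tendsto_of_le_of_le tendsto_const_nhds h
          (fun _ => zero_le) (fun _ => le_add_self)
    · rintro ⟨h1, h2⟩
      rw [tendsto_iff_edist_tendsto_0] at h1 h2
      simpa using h1.add h2
  constructor
  · rintro ⟨⟨hu, hU⟩, φ, hφ, hT⟩
    refine ⟨hu, hU, ?_⟩
    exact mem_closure_of_tendsto ((key hu hU φ hφ).1 hT)
      (Eventually.of_forall fun k => ⟨φ k, hφ k, rfl⟩)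
  · rintro ⟨hu, hU, h⟩
    obtain ⟨z, hz, hT⟩ := mem_closure_iff_seq_limit.1 h
    choose φ hφ hzφ using hz
    refine ⟨⟨hu, hU⟩, φ, hφ, (key hu hU φ hφ).2 ?_⟩
    simpa only [← hzφ] using hT

lemma inner_coord {ψ : Eu n → ℝ} (i : Fin n) (V : Eu n → Eu n) :
    (fun x => ⟪V x, ψ x • (EuclideanSpace.single i (1:ℝ) : Eu n)⟫) = fun x => V x i * ψ x := by
  funext x
  rw [inner_smul_right, EuclideanSpace.inner_single_right]
  simp [mul_comm]

lemma memLp_smul_single {D : Set (Eu n)} {ψ : Eu n → ℝ} (hψ : IsTestFun D ψ) (i : Fin n) :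
    MemLp (fun x => ψ x • (EuclideanSpace.single i (1:ℝ) : Eu n)) 2 (volume.restrict D) := by
  have h1 := hψ.memLp 2 (volume.restrict D)
  refine MemLp.of_le h1 (h1.1.smul_const _) (ae_of_all _ fun x => ?_)
  rw [norm_smul]
  simp

/-- integration by parts on the Sobolev space. -/
lemma KW_ibp {D : Set (Eu n)} {v : Eu n → ℝ} {V : Eu n → Eu n}
    (hv : MemLp v 2 (volume.restrict D))
    (hV : MemLp V 2 (volume.restrict D)) (h : mkW hv hV ∈ KW D)
    {ψ : Eu n → ℝ} (hψ : IsTestFun D ψ) (i : Fin n) :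
    ∫ x in D, V x i * ψ x = - ∫ x in D, v x * pd i ψ x := by
  have hs := memLp_smul_single hψ i
  have hp := (hψ.pd i).memLp 2 (volume.restrict D)
  have key : ⟪(mkW hv hV).snd, hs.toLp _⟫ = - ⟪(mkW hv hV).fst, hp.toLp _⟫ := by
    refine KW_induction (P := fun z => ⟪z.snd, hs.toLp _⟫ = - ⟪z.fst, hp.toLp _⟫) ?_ ?_ h
    · refine isClosed_eq ?_ ?_ <;> fun_prop
    · intro φ hφ
      change ⟪(hφ.memLp_gradient 2 _).toLp _, hs.toLp _⟫ = - ⟪(hφ.memLp 2 _).toLp _, hp.toLp _⟫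
      rw [inner_toLp, inner_toLp, inner_coord i (fun x => gradient φ x)]
      simp only [gradient_apply]
      rw [hψ.setIntegral]
      have := ibp i hψ hφ.1
      have e : ∀ x, ⟪φ x, pd i ψ x⟫ = φ x * pd i ψ x := fun x => by simp [mul_comm]
      simp only [e]
      rw [(hψ.pd i).setIntegral, this, neg_neg]
  change ⟪hV.toLp _, hs.toLp _⟫ = - ⟪hv.toLp _, hp.toLp _⟫ at key
  rw [inner_toLp, inner_toLp, inner_coord i V] at key
  rw [key]
  congr 1
  refine integral_congr_ae (ae_of_all _ fun x => ?_)
  simp [mul_comm]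

lemma memLp_coord {D : Set (Eu n)} {V : Eu n → Eu n}
    (hV : MemLp V 2 (volume.restrict D)) (i : Fin n) :
    MemLp (fun x => V x i) 2 (volume.restrict D) := by
  refine MemLp.of_le hV ?_ (ae_of_all _ fun x => ?_)
  · exact (EuclideanSpace.proj (𝕜 := ℝ) i).continuous.comp_aestronglyMeasurable hV.1
  · exact PiLp.norm_apply_le _ _

lemma KW_ibp_lap {D : Set (Eu n)} {v : Eu n → ℝ} {V : Eu n → Eu n}
    (hv : MemLp v 2 (volume.restrict D))
    (hV : MemLp V 2 (volume.restrict D)) (h : mkW hv hV ∈ KW D)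
    {ψ : Eu n → ℝ} (hψ : IsTestFun D ψ) :
    ∫ x in D, ⟪V x, gradient ψ x⟫ = - ∫ x in D, v x * lap ψ x := by
  simp only [inner_gradient, lap, Finset.mul_sum]
  rw [integral_finsetSum, integral_finsetSum, ← Finset.sum_neg_distrib]
  · refine Finset.sum_congr rfl fun i _ => ?_
    exact KW_ibp hv hV h (hψ.pd i) i
  · intro i _
    exact hv.integrable_mul (((hψ.pd i).pd i).memLp 2 _)
  · intro i _
    exact (memLp_coord hV i).integrable_mul ((hψ.pd i).memLp 2 _)

lemma norm_sq_toLp {E : Type*} [NormedAddCommGroup E] [InnerProductSpace ℝ E] {D : Set (Eu n)}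
    {f : Eu n → E} (hf : MemLp f 2 (volume.restrict D)) :
    ‖hf.toLp f‖ ^ 2 = ∫ x in D, ‖f x‖ ^ 2 := by
  rw [← real_inner_self_eq_norm_sq, inner_toLp]
  simp

/-- Poincare inequality for test functions. -/
lemma poincare_test {D : Set (Eu n)} {M : ℝ} (hM : ∀ x ∈ D, ‖x‖ ≤ M) (hM0 : 0 ≤ M)
    (hDm : MeasurableSet D) (i : Fin n)
    {φ : Eu n → ℝ} (hφ : IsTestFun D φ) :
    ‖(testW hφ).fst‖ ≤ 2 * M * ‖(testW hφ).snd‖ := by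
  change ‖(hφ.memLp 2 (volume.restrict D)).toLp φ‖
    ≤ 2 * M * ‖(hφ.memLp_gradient 2 (volume.restrict D)).toLp _‖
  refine abs_le_of_sq_le_sq' ?_ (by positivity) |>.2
  rw [mul_pow, norm_sq_toLp, norm_sq_toLp]
  have hcoord : ContDiff ℝ (⊤ : ℕ∞) (fun x : Eu n => x i) :=
    (EuclideanSpace.proj (𝕜 := ℝ) i : Eu n →L[ℝ] ℝ).contDiff
  have hpd : ∀ x, pd i (fun x : Eu n => x i) x = 1 := by
    intro x
    have : (fun x : Eu n => x i) = (EuclideanSpace.proj (𝕜 := ℝ) i : Eu n →L[ℝ] ℝ) := rfl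
    unfold pd
    rw [this, ContinuousLinearMap.fderiv]
    simp
  have h1 := ibp i (hφ.mul hφ.1) hcoord
  have h2 : ∀ x, pd i (fun x => φ x * φ x) x = 2 * (φ x * pd i φ x) := by
    intro x
    rw [pd_mul i (contDiff_diff hφ.1 x) (contDiff_diff hφ.1 x)]
    ring
  simp only [hpd, h2, one_mul] at h1
  have h3 : ∫ x in D, ‖φ x‖ ^ 2 = ∫ x in D, -(2 * (x i * (φ x * pd i φ x))) := by
    have e1 : ∫ x in D, ‖φ x‖ ^ 2 = ∫ x, φ x * φ x := by
      rw [← hφ.setIntegral]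
      refine integral_congr_ae (ae_of_all _ fun x => ?_)
      simp [sq]
    have e2 : ∫ x in D, -(2 * (x i * (φ x * pd i φ x))) = - ∫ x, x i * (2 * (φ x * pd i φ x)) := by
      rw [integral_neg]
      congr 1
      have := (hφ.mul (contDiff_pd hφ.1 i)).setIntegral (fun x => 2 * x i)
      rw [show (fun x : Eu n => 2 * (x i * (φ x * pd i φ x)))
        = fun x => 2 * x i * (φ x * pd i φ x) from by funext x; ring, this]
      refine integral_congr_ae (ae_of_all _ fun x => ?_)
      ring
    rw [e1, e2, h1, neg_neg]
  have hi1 : Integrable (fun x => ‖φ x‖ ^ 2) (volume.restrict D) :=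
    (hφ.memLp 2 _).integrable_norm_pow (by simp)
  have hi2 : Integrable (fun x => ‖gradient φ x‖ ^ 2) (volume.restrict D) :=
    (hφ.memLp_gradient 2 _).integrable_norm_pow (by simp)
  have h4 : ∫ x in D, -(2 * (x i * (φ x * pd i φ x)))
      ≤ ∫ x in D, (1/2 * ‖φ x‖ ^ 2 + 2 * M ^ 2 * ‖gradient φ x‖ ^ 2) := by
    refine setIntegral_mono_on ?_ ?_ hDm ?_
    · have := ((hφ.mul (contDiff_pd hφ.1 i)).mul hcoord).integrable (volume.restrict D)
      refine ((this.const_mul 2).neg).congr (ae_of_all _ fun x => ?_)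
      simp only [Pi.neg_apply]
      ring
    · exact (hi1.const_mul _).add (hi2.const_mul _)
    · intro x hx
      have a1 : |x i| ≤ M := by
        rw [← Real.norm_eq_abs]
        exact (PiLp.norm_apply_le x i).trans (hM x hx)
      have a2 : |pd i φ x| ≤ ‖gradient φ x‖ := by
        rw [← gradient_apply, ← Real.norm_eq_abs]
        exact PiLp.norm_apply_le (gradient φ x) i
      have a3 : (x i) ^ 2 * (pd i φ x) ^ 2 ≤ M ^ 2 * ‖gradient φ x‖ ^ 2 := by
        rw [← sq_abs (x i), ← sq_abs (pd i φ x)]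
        gcongr
      rw [Real.norm_eq_abs, sq_abs]
      nlinarith [sq_nonneg (φ x + 2 * (x i * pd i φ x))]
  rw [integral_add (hi1.const_mul _) (hi2.const_mul _), integral_const_mul,
    integral_const_mul] at h4
  rw [← h3] at h4
  linarith

lemma poincare {D : Set (Eu n)} {M : ℝ} (hM : ∀ x ∈ D, ‖x‖ ≤ M) (hM0 : 0 ≤ M)
    (hDm : MeasurableSet D) (i : Fin n) {z : WW D} (hz : z ∈ KW D) :
    ‖z.fst‖ ≤ 2 * M * ‖z.snd‖ := by
  refine KW_induction (P := fun z => ‖z.fst‖ ≤ 2 * M * ‖z.snd‖) ?_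
    (fun φ hφ => poincare_test hM hM0 hDm i hφ) hz
  refine isClosed_le ?_ ?_ <;> fun_prop

lemma eLpNorm_mono_const {E : Type*} [NormedAddCommGroup E] {μ : Measure (Eu n)}
    [IsFiniteMeasure μ] {p q : ℝ≥0∞} (hp : 1 ≤ p) (hpq : p ≤ q) :
    ∃ C : ℝ≥0∞, C ≠ ⊤ ∧ ∀ f : Eu n → E, AEStronglyMeasurable f μ →
      eLpNorm f p μ ≤ C * eLpNorm f q μ := by
  refine ⟨μ univ ^ (1 / p.toReal - 1 / q.toReal), ?_, ?_⟩
  · refine (ENNReal.rpow_lt_top_of_nonneg ?_ (measure_ne_top _ _)).ne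
    rcases eq_or_ne q ⊤ with rfl | hq
    · simp
    · have hp' : p ≠ ⊤ := fun h => hq (top_le_iff.1 (h ▸ hpq))
      have : 0 < p.toReal := ENNReal.toReal_pos (by positivity) hp'
      rw [sub_nonneg]
      exact one_div_le_one_div_of_le this (ENNReal.toReal_mono hq hpq)
  · intro f hf
    rw [mul_comm]
    exact eLpNorm_le_eLpNorm_mul_rpow_measure_univ hpq hf

/-- Sup bound in dimension one. -/
lemma sup_bound_one {Ω : Set (Eu 1)} {φ : Eu 1 → ℝ} (hφ : IsTestFun Ω φ) (x : Eu 1) :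
    ‖φ x‖ₑ ≤ eLpNorm (fun x => gradient φ x) 1 volume := by
  set e : Eu 1 := EuclideanSpace.single 0 1 with he
  have hmp : MeasurePreserving (fun t : ℝ => t • e) volume volume := by
    have := (OrthonormalBasis.singleton (Fin 1) ℝ).measurePreserving_repr
    refine (congrArg (fun F => MeasurePreserving F volume volume) ?_).mp this
    funext t
    ext i
    rw [OrthonormalBasis.repr_apply_apply]
    fin_cases i
    simp [he]
  have hx : x = (x 0) • e := by
    ext i
    fin_cases i
    simp [he]
  have hder : ∀ t : ℝ, HasDerivAt (fun t : ℝ => φ (t • e)) (pd 0 φ (t • e)) t := by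
    intro t
    have h1 : HasDerivAt (fun t : ℝ => t • e) e t := by
      simpa using (hasDerivAt_id t).smul_const e
    exact (contDiff_diff hφ.1 (t • e)).hasFDerivAt.comp_hasDerivAt t h1
  have hcs : HasCompactSupport (fun t : ℝ => φ (t • e)) := by
    refine hφ.2.1.comp_isClosedEmbedding ?_
    have : e ≠ 0 := by
      rw [he]
      simp
    exact isClosedEmbedding_smul_left this
  have hc : ContDiff ℝ 1 (fun t : ℝ => φ (t • e)) :=
    (hφ.1.of_le (by exact_mod_cast le_top)).comp (contDiff_id.smul contDiff_const)
  have h := hcs.enorm_le_lintegral_Ici_deriv hc (x 0)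
  simp only at h
  rw [← hx] at h
  refine h.trans ?_
  refine (setLIntegral_le_lintegral _ _).trans ?_
  rw [eLpNorm_one_eq_lintegral_enorm]
  rw [← hmp.lintegral_comp (continuous_gradient hφ.1).measurable.enorm]
  refine lintegral_mono fun t => ?_
  rw [(hder t).deriv, ← gradient_apply, enorm_le_iff_norm_le]
  exact PiLp.norm_apply_le _ _

lemma enorm_toLp_eq {E : Type*} [NormedAddCommGroup E] {D : Set (Eu n)}
    {f : Eu n → E} (hf : MemLp f 2 (volume.restrict D)) :
    ENNReal.ofReal ‖hf.toLp f‖ = eLpNorm f 2 (volume.restrict D) := by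
  rw [Lp.norm_toLp, ENNReal.ofReal_toReal hf.2.ne]

lemma finite_restrict {D : Set (Eu n)} (hDb : IsBounded D) :
    IsFiniteMeasure (volume.restrict D) :=
  ⟨by rw [Measure.restrict_apply_univ]; exact hDb.measure_lt_top⟩

lemma functional_bound {D : Set (Eu n)} (hDo : IsOpen D) (hDb : IsBounded D) (hn : n ≠ 0)
    {q : ℝ≥0∞} (hq : (n : ℝ≥0∞) < q) :
    ∃ C : ℝ≥0∞, C ≠ ⊤ ∧ ∀ g φ, MemLp g q (volume.restrict D) → IsTestFun D φ →
      ENNReal.ofReal |∫ x in D, g x * φ x| ≤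
        C * eLpNorm g q (volume.restrict D) *
          eLpNorm (fun x => gradient φ x) 2 (volume.restrict D) := by
  have := finite_restrict hDb
  rcases eq_or_ne n 1 with rfl | hn1
  · have hq1 : (1 : ℝ≥0∞) ≤ q := by simpa using hq.le
    obtain ⟨C1, hC1, h1⟩ := eLpNorm_mono_const (E := ℝ) (μ := volume.restrict D) le_rfl hq1
    obtain ⟨C2, hC2, h2⟩ := eLpNorm_mono_const (E := Eu 1) (μ := volume.restrict D)
      (p := 1) (q := 2) le_rfl (by norm_num)
    refine ⟨C1 * C2, ENNReal.mul_ne_top hC1 hC2, fun g φ hg hφ => ?_⟩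
    have hh := holder_abs (p := 1) (q := ⊤) (hg.mono_exponent hq1) (hφ.memLp ⊤ (volume.restrict D))
    refine hh.trans ?_
    have h3 : eLpNorm φ ⊤ (volume.restrict D) ≤ eLpNorm (fun x => gradient φ x) 1
        (volume.restrict D) := by
      have : eLpNorm (fun x => gradient φ x) 1 (volume.restrict D)
          = eLpNorm (fun x => gradient φ x) 1 volume := by
        refine eLpNorm_restrict_eq_of_support_subset fun x hx => ?_
        by_contra hxD
        apply hx
        ext i
        rw [gradient_apply, (hφ.pd i).eq_zero hxD]
        rfl
      rw [this, eLpNorm_exponent_top]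
      refine eLpNormEssSup_le_of_ae_enorm_bound (ae_of_all _ fun x => sup_bound_one hφ x)
    calc _ ≤ (C1 * eLpNorm g q (volume.restrict D)) * (C2 * _) :=
          mul_le_mul' (h1 g hg.1) (h3.trans (h2 _ (hφ.memLp_gradient 2 _).1))
      _ = _ := by ring
  · have hn2 : 2 ≤ n := by omega
    have hq2 : (2 : ℝ≥0∞) ≤ q := le_trans (by exact_mod_cast hn2) hq.le
    obtain ⟨C1, hC1, h1⟩ := eLpNorm_mono_const (E := ℝ) (μ := volume.restrict D)
      (by norm_num) hq2
    obtain ⟨M, hM0, hM⟩ := hDb.exists_pos_norm_le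
    refine ⟨C1 * ENNReal.ofReal (2 * M), ENNReal.mul_ne_top hC1 ENNReal.ofReal_ne_top,
      fun g φ hg hφ => ?_⟩
    have hh := holder_abs (p := 2) (q := 2) (hg.mono_exponent hq2)
      (hφ.memLp 2 (volume.restrict D))
    refine hh.trans ?_
    have h3 := poincare_test hM hM0.le hDo.measurableSet ⟨0, by omega⟩ hφ
    have h4 : eLpNorm φ 2 (volume.restrict D) ≤ ENNReal.ofReal (2 * M) *
        eLpNorm (fun x => gradient φ x) 2 (volume.restrict D) := by
      rw [← enorm_toLp_eq (hφ.memLp 2 _), ← enorm_toLp_eq (hφ.memLp_gradient 2 _),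
        ← ENNReal.ofReal_mul (by positivity)]
      exact ENNReal.ofReal_le_ofReal h3
    calc _ ≤ (C1 * eLpNorm g q (volume.restrict D)) * (ENNReal.ofReal (2 * M) * _) :=
          mul_le_mul' (h1 g hg.1) h4
      _ = _ := by ring

/-- energy estimate. -/
lemma energy {D : Set (Eu n)} (hDo : IsOpen D) (hDb : IsBounded D) (hn : n ≠ 0)
    {q : ℝ≥0∞} (hq : (n : ℝ≥0∞) < q) :
    ∃ C : ℝ≥0∞, C ≠ ⊤ ∧ ∀ (g v : Eu n → ℝ) (V : Eu n → Eu n)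
      (_ : MemLp g q (volume.restrict D))
      (hv : MemLp v 2 (volume.restrict D)) (hV : MemLp V 2 (volume.restrict D)),
      mkW hv hV ∈ KW D →
      (∀ ψ, IsTestFun D ψ → ∫ x in D, ⟪V x, gradient ψ x⟫ = - ∫ x in D, g x * ψ x) →
      eLpNorm v 2 (volume.restrict D) ≤ C * eLpNorm g q (volume.restrict D) := by
  obtain ⟨C, hC, hb⟩ := functional_bound hDo hDb hn hq
  obtain ⟨M, hM0, hM⟩ := hDb.exists_pos_norm_le
  refine ⟨ENNReal.ofReal (2 * M) * C, ENNReal.mul_ne_top ENNReal.ofReal_ne_top hC, ?_⟩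
  intro g v V hg hv hV hK hw
  set c : ℝ := (C * eLpNorm g q (volume.restrict D)).toReal with hc
  have hfin : C * eLpNorm g q (volume.restrict D) ≠ ⊤ := ENNReal.mul_ne_top hC hg.2.ne
  have key : |⟪hV.toLp V, (mkW hv hV).snd⟫| ≤ c * ‖(mkW hv hV).snd‖ := by
    refine KW_induction (P := fun z => |⟪hV.toLp V, z.snd⟫| ≤ c * ‖z.snd‖) ?_ ?_ hK
    · refine isClosed_le ?_ ?_ <;> fun_prop
    · intro φ hφ
      change |⟪hV.toLp V, (hφ.memLp_gradient 2 (volume.restrict D)).toLp _⟫|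
        ≤ c * ‖(hφ.memLp_gradient 2 (volume.restrict D)).toLp _‖
      rw [inner_toLp, hw φ hφ, abs_neg]
      rw [← ENNReal.ofReal_le_ofReal_iff (by positivity), ENNReal.ofReal_mul (by positivity),
        enorm_toLp_eq, hc, ENNReal.ofReal_toReal hfin]
      exact hb g φ hg hφ
  change |⟪hV.toLp V, hV.toLp V⟫| ≤ c * ‖hV.toLp V‖ at key
  rw [real_inner_self_eq_norm_sq, abs_of_nonneg (by positivity)] at key
  have h5 : ‖hV.toLp V‖ ≤ c := by
    rcases eq_or_lt_of_le (norm_nonneg (hV.toLp V)) with h0 | h0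
    · rw [← h0, hc]
      exact ENNReal.toReal_nonneg
    · rw [sq] at key
      exact le_of_mul_le_mul_right key h0
  have h6 := poincare hM hM0.le hDo.measurableSet ⟨0, by omega⟩ hK
  change ‖hv.toLp v‖ ≤ 2 * M * ‖hV.toLp V‖ at h6
  rw [← enorm_toLp_eq hv, mul_assoc, ← ENNReal.ofReal_toReal hfin, ← hc,
    ← ENNReal.ofReal_mul (by positivity)]
  exact ENNReal.ofReal_le_ofReal (h6.trans (by gcongr))

/-- abstract existence. -/
lemma abstract_existence {H1 H2 : Type*} [NormedAddCommGroup H1] [InnerProductSpace ℝ H1]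
    [NormedAddCommGroup H2] [InnerProductSpace ℝ H2]
    (K : Submodule ℝ (WithLp 2 (H1 × H2))) [CompleteSpace K] {M : ℝ}
    (hM : ∀ z ∈ K, ‖z.fst‖ ≤ M * ‖z.snd‖) (f : H1) :
    ∃ z ∈ K, ∀ w ∈ K, ⟪z.snd, w.snd⟫ = - ⟪f, w.fst⟫ := by
  let P1 : K →L[ℝ] H1 := (WithLp.fstL 2 ℝ _ _).comp K.subtypeL
  let P2 : K →L[ℝ] H2 := (WithLp.sndL 2 ℝ _ _).comp K.subtypeL
  let B : K →L[ℝ] K →L[ℝ] ℝ := (innerSL ℝ).bilinearComp P2 P2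
  have hBa : ∀ z w : K, B z w = ⟪z.1.snd, w.1.snd⟫ := fun z w => rfl
  have hcoer : IsCoercive B := by
    refine ⟨1 / (M ^ 2 + 1), by positivity, fun z => ?_⟩
    rw [hBa, real_inner_self_eq_norm_sq]
    have h1 := hM z.1 z.2
    have h2 : ‖z‖ * ‖z‖ = ‖z.1.fst‖ ^ 2 + ‖z.1.snd‖ ^ 2 := by
      rw [← sq, ← WithLp.prod_norm_sq_eq_of_L2]
      rfl
    rw [mul_assoc, h2, one_div, inv_mul_le_iff₀ (by positivity)]
    have h3 : ‖z.1.fst‖ ^ 2 ≤ (M * ‖z.1.snd‖) ^ 2 := by gcongr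
    nlinarith
  let ℓ : K →L[ℝ] ℝ := -((innerSL ℝ f).comp P1)
  let z : K := hcoer.continuousLinearEquivOfBilin.symm
    ((InnerProductSpace.toDual ℝ K).symm ℓ)
  have hzz : ∀ w, B z w = ℓ w := by
    intro w
    rw [← hcoer.continuousLinearEquivOfBilin_apply, ContinuousLinearEquiv.apply_symm_apply,
      InnerProductSpace.toDual_symm_apply]
  exact ⟨z.1, z.2, fun w hw => hzz ⟨w, hw⟩⟩

/-- existence of weak solutions. -/
lemma existence {D : Set (Eu n)} (hDo : IsOpen D) (hDb : IsBounded D) (hn : n ≠ 0)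
    {f : Eu n → ℝ} (hf : MemLp f 2 (volume.restrict D)) :
    ∃ (v : Eu n → ℝ) (V : Eu n → Eu n)
      (hv : MemLp v 2 (volume.restrict D)) (hV : MemLp V 2 (volume.restrict D)),
      mkW hv hV ∈ KW D ∧
      (∀ ψ, IsTestFun D ψ → ∫ x in D, ⟪V x, gradient ψ x⟫ = - ∫ x in D, f x * ψ x) := by
  obtain ⟨M, hM0, hM⟩ := hDb.exists_pos_norm_le
  obtain ⟨z, hzK, hz⟩ := abstract_existence (KW D) (M := 2 * M)
    (fun z hz => poincare hM hM0.le hDo.measurableSet ⟨0, by omega⟩ hz) (hf.toLp f)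
  refine ⟨z.fst, z.snd, Lp.memLp _, Lp.memLp _, ?_, ?_⟩
  · have : mkW (Lp.memLp z.fst) (Lp.memLp z.snd) = z := by
      unfold mkW
      rw [Lp.toLp_coeFn, Lp.toLp_coeFn]
      rfl
    rw [this]
    exact hzK
  · intro ψ hψ
    have h := hz (testW hψ) (testW_mem hψ)
    change _ = - ⟪hf.toLp f, (hψ.memLp 2 _).toLp ψ⟫ at h
    rw [inner_toLp] at h
    have e2 : ⟪z.snd, (testW hψ).snd⟫ = ∫ x in D, ⟪z.snd x, gradient ψ x⟫ := by
      rw [← inner_toLp (Lp.memLp z.snd) (hψ.memLp_gradient 2 _), Lp.toLp_coeFn]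
      rfl
    rw [← e2, h]
    congr 1
    refine integral_congr_ae (ae_of_all _ fun x => ?_)
    simp [mul_comm]

lemma patch {D : Set (Eu n)} {v : Eu n → ℝ}
    (h : ∀ x ∈ D, ∃ δ > 0, ball x δ ⊆ D ∧ ∃ h : Eu n → ℝ, ContDiff ℝ (⊤ : ℕ∞) h ∧
      ∀ᵐ s, s ∈ ball x δ → v s = h s) :
    ∃ w : Eu n → ℝ, ContDiffOn ℝ (⊤ : ℕ∞) w D ∧ ∀ᵐ s, s ∈ D → v s = w s := by
  choose! δ hδ hsub h hs hae using h
  have key : ∀ x ∈ D, ∀ y ∈ ball x (δ x), h y y = h x y := by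
    intro x hx y hy
    have hyD := hsub x hx hy
    have hae' : h y =ᵐ[volume.restrict (ball x (δ x) ∩ ball y (δ y))] h x := by
      rw [Filter.EventuallyEq, ae_restrict_iff' (measurableSet_ball.inter measurableSet_ball)]
      filter_upwards [hae x hx, hae y hyD] with s h1 h2 hs'
      rw [← h1 hs'.1, ← h2 hs'.2]
    exact Measure.eqOn_open_of_ae_eq hae' (isOpen_ball.inter isOpen_ball)
      (hs y hyD).continuous.continuousOn (hs x hx).continuous.continuousOn
      ⟨hy, mem_ball_self (hδ y hyD)⟩
  refine ⟨fun x => h x x, ?_, ?_⟩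
  · intro x hx
    have : (fun x => h x x) =ᶠ[𝓝 x] h x := by
      filter_upwards [ball_mem_nhds x (hδ x hx)] with y hy
      exact key x hx y hy
    exact (((hs x hx).contDiffAt).congr_of_eventuallyEq this).contDiffWithinAt
  · have : volume {s | ¬ (s ∈ D → v s = h s s)} = 0 := by
      refine measure_null_of_locally_null _ fun x hx => ?_
      have hxD : x ∈ D := by
        by_contra hn
        exact hx fun h => absurd h hn
      refine ⟨{s | ¬ (s ∈ ball x (δ x) → v s = h x s)}, ?_, hae x hxD⟩
      refine mem_nhdsWithin.2 ⟨ball x (δ x), isOpen_ball, mem_ball_self (hδ x hxD), ?_⟩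
      rintro s ⟨hs1, hs2⟩ hcon
      exact hs2 fun _ => by rw [hcon hs1, key x hxD s hs1]
    exact this

lemma test_mul_contOn {D : Set (Eu n)} (hD : IsOpen D) {ψ F : Eu n → ℝ} (hψ : IsTestFun D ψ)
    (hF : ContinuousOn F D) : Integrable (fun x => ψ x * F x) := by
  refine Continuous.integrable_of_hasCompactSupport ?_ hψ.2.1.mul_right
  exact (hψ.1.continuous.continuousOn.mul hF).continuous_of_tsupport_subset hD
    (tsupport_mul_subset_left.trans hψ.2.2)

lemma grad_eq {D : Set (Eu n)} (hD : IsOpen D) (hDb : IsBounded D) {v w : Eu n → ℝ}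
    {V : Eu n → Eu n}
    (hv : MemLp v 2 (volume.restrict D)) (hV : MemLp V 2 (volume.restrict D))
    (hK : mkW hv hV ∈ KW D) (hw : ContDiffOn ℝ (⊤ : ℕ∞) w D)
    (hvw : ∀ᵐ s, s ∈ D → v s = w s) :
    V =ᵐ[volume.restrict D] fun x => gradient w x := by
  have := finite_restrict hDb
  have hcoord : ∀ i, ∀ᵐ x, x ∈ D → V x i - pd i w x = 0 := by
    intro i
    have hVi : IntegrableOn (fun x => V x i) D :=
      (memLp_coord hV i).integrable (by norm_num)
    have hpc : ContinuousOn (pd i w) D :=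
      (hw.continuousOn_fderiv_of_isOpen hD (by simp)).clm_apply continuousOn_const
    refine hD.ae_eq_zero_of_integral_contDiff_smul_eq_zero
      (hVi.locallyIntegrableOn.sub (hpc.locallyIntegrableOn hD.measurableSet)) ?_
    intro ψ h1 h2 h3
    have hψ : IsTestFun D ψ := ⟨h1, h2, h3⟩
    have hdiff : ∀ x ∈ tsupport ψ, DifferentiableAt ℝ w x := fun x hx =>
      (hw.contDiffAt (hD.mem_nhds (h3 hx))).differentiableAt (by simp)
    have hib : ∫ x, ψ x * pd i w x = - ∫ x, pd i ψ x * w x := by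
      refine integral_mul_fderiv_eq_neg_fderiv_mul_of_integrable ?_ ?_ ?_ ?_ hdiff
      · exact test_mul_contOn hD (hψ.pd i) hw.continuousOn
      · exact test_mul_contOn hD hψ hpc
      · exact test_mul_contOn hD hψ hw.continuousOn
      · intro x _
        exact contDiff_diff h1 x
    have hk := KW_ibp hv hV hK hψ i
    have e1 : ∫ x in D, v x * pd i ψ x = ∫ x, pd i ψ x * w x := by
      have : ∫ x in D, v x * pd i ψ x = ∫ x in D, w x * pd i ψ x := by
        refine integral_congr_ae ?_
        rw [Filter.EventuallyEq, ae_restrict_iff' hD.measurableSet]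
        filter_upwards [hvw] with s hs hsD
        rw [hs hsD]
      rw [this, (hψ.pd i).setIntegral]
      simp only [mul_comm]
    have hi1 : Integrable (fun x => V x i * ψ x) := by
      have : IntegrableOn (fun x => V x i * ψ x) D :=
        (memLp_coord hV i).integrable_mul (hψ.memLp 2 _)
      rw [integrableOn_iff_integrable_of_support_subset] at this
      · exact this
      · intro x hx
        by_contra hxD
        exact hx (by simp [hψ.eq_zero hxD])
    have e2 : ∀ x, ψ x • (V x i - pd i w x) = V x i * ψ x - ψ x * pd i w x := by
      intro x
      rw [smul_eq_mul]
      ring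
    simp only [e2]
    rw [integral_sub hi1 (test_mul_contOn hD hψ hpc), ← hψ.setIntegral, hk, e1, hib]
    ring
  rw [Filter.EventuallyEq, ae_restrict_iff' hD.measurableSet]
  rw [← ae_all_iff] at hcoord
  filter_upwards [hcoord] with x hx hxD
  ext i
  rw [gradient_apply]
  linarith [hx i hxD]

lemma indicator_mul_test {D : Set (Eu n)} (hD : IsOpen D) (v φ : Eu n → ℝ) :
    ∫ y, D.indicator v y * φ y = ∫ y in D, v y * φ y := by
  rw [← integral_indicator hD.measurableSet]
  refine integral_congr_ae (ae_of_all _ fun x => ?_)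
  by_cases hx : x ∈ D <;> simp [hx]

lemma smooth_solution {D : Set (Eu n)} (hD : IsOpen D) (hDb : IsBounded D) (hn : n ≠ 0)
    (hpar : ∀ δ : ℝ, 0 < δ → ∃ E R : Eu n → ℝ, IsParam δ E R)
    {f : Eu n → ℝ} (hf : IsTestFun D f) :
    ∃ w, MemW120 D w ∧ WeakLapEq D f w ∧ ContinuousOn w D := by
  have := finite_restrict hDb
  obtain ⟨v, V, hv, hV, hK, hw⟩ := existence hD hDb hn (hf.memLp 2 _)
  have hvi : Integrable (D.indicator v) :=
    (integrable_indicator_iff hD.measurableSet).2 (hv.integrable (by norm_num))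
  have hvw : ∀ φ, IsTestFun D φ →
      ∫ y, D.indicator v y * lap φ y = ∫ y, f y * φ y := by
    intro φ hφ
    rw [indicator_mul_test hD, ← hφ.setIntegral]
    have h1 := KW_ibp_lap hv hV hK hφ
    rw [hw φ hφ] at h1
    linarith
  obtain ⟨w, hws, hwv⟩ := patch (D := D) (v := v) (by
    intro x hx
    obtain ⟨r, hr, hrs⟩ := Metric.isOpen_iff.1 hD x hx
    have hδ : 0 < r / 3 := by positivity
    obtain ⟨E, R, hP⟩ := hpar (r / 3) hδ
    have hb : ball x (3 * (r / 3)) ⊆ D := by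
      rwa [mul_div_cancel₀ _ (by norm_num)]
    have hb' : ball x (r / 3) ⊆ D := (ball_subset_ball (by linarith)).trans hrs
    obtain ⟨h, hh, hae⟩ := local_smooth hδ hP hvi hf hvw hb
    refine ⟨r / 3, hδ, hb', h, hh, ?_⟩
    filter_upwards [hae] with s hs hsb
    rw [← hs hsb, indicator_of_mem (hb' hsb)])
  have hg := grad_eq hD hDb hv hV hK hws hwv
  have hvw' : v =ᵐ[volume.restrict D] w := by
    rw [Filter.EventuallyEq, ae_restrict_iff' hD.measurableSet]
    exact hwv
  have hw2 := (memLp_congr_ae hvw').1 hv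
  have hW2 := (memLp_congr_ae hg).1 hV
  refine ⟨w, memW120_iff.2 ⟨hw2, hW2, ?_⟩, ?_, hws.continuousOn⟩
  · rw [← mkW_congr hv hV hw2 hW2 hvw' hg]
    exact hK
  · intro φ hφ
    rw [← hw φ hφ]
    refine integral_congr_ae ?_
    filter_upwards [hg] with x hx
    rw [hx]

lemma density {D : Set (Eu n)} (hD : IsOpen D) (hDb : IsBounded D) {q : ℝ≥0∞} (hq1 : 1 ≤ q)
    (hqt : q ≠ ⊤) {f : Eu n → ℝ} (hf : MemLp f q (volume.restrict D)) {ε : ℝ} (hε : 0 < ε) :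
    ∃ h, IsTestFun D h ∧ eLpNorm (fun x => f x - h x) q (volume.restrict D)
      ≤ ENNReal.ofReal ε := by
  have hε2 : 0 < ε / 2 := by positivity
  obtain ⟨δ, hδ, hδs⟩ := hf.eLpNorm_indicator_le hq1 hqt hε2
  obtain ⟨K, hKD, hK, hKm⟩ := hD.measurableSet.exists_isCompact_sdiff_lt
    (μ := volume) hDb.measure_lt_top.ne (ENNReal.ofReal_pos.2 hδ).ne'
  have hA := hδs Kᶜ hK.measurableSet.compl (by
    rw [Measure.restrict_apply hK.measurableSet.compl]
    refine le_trans (measure_mono ?_) hKm.le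
    rintro x ⟨h1, h2⟩
    exact ⟨h2, h1⟩)
  obtain ⟨g, hgc, hgs, hgε⟩ := (hf.indicator hK.measurableSet).exist_eLpNorm_sub_le hqt hq1 hε2
  obtain ⟨L, hL, hKL, hLD⟩ := exists_compact_between hK hD hKD
  obtain ⟨χ, h1, h0, h01⟩ := exists_contMDiffMap_one_nhds_of_subset_interior
    (n := (⊤ : ℕ∞)) (modelWithCornersSelf ℝ (Eu n)) hK.isClosed hKL
  have hχs : ContDiff ℝ (⊤ : ℕ∞) (χ : Eu n → ℝ) := χ.contMDiff.contDiff
  have hsupp : tsupport (χ : Eu n → ℝ) ⊆ L := by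
    refine closure_minimal ?_ hL.isClosed
    intro x hx
    by_contra hxL
    exact hx (h0 x hxL)
  have hχ : IsTestFun D (χ : Eu n → ℝ) :=
    ⟨hχs, HasCompactSupport.of_support_subset_isCompact hL ((subset_tsupport _).trans hsupp),
      hsupp.trans hLD⟩
  refine ⟨_, hχ.mul hgs, ?_⟩
  have e : (fun x => f x - χ x * g x)
      = (Kᶜ.indicator f) + fun x => (K.indicator f x - χ x * g x) := by
    funext x
    by_cases hx : x ∈ K <;> simp [hx, sub_eq_add_neg]
  rw [e]
  have hm : AEStronglyMeasurable (fun x => (K.indicator f x - χ x * g x)) (volume.restrict D) :=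
    (hf.1.indicator hK.measurableSet).sub (hχs.continuous.mul hgs.continuous).aestronglyMeasurable
  refine (eLpNorm_add_le (hf.1.indicator hK.measurableSet.compl) hm hq1).trans ?_
  have hB : eLpNorm (fun x => (K.indicator f x - χ x * g x)) q (volume.restrict D)
      ≤ ENNReal.ofReal (ε / 2) := by
    refine le_trans (eLpNorm_mono fun x => ?_) hgε
    by_cases hx : x ∈ K
    · have : χ x = 1 := h1.self_of_nhdsSet x hx
      simp [this]
    · simp only [indicator_of_notMem hx, Pi.sub_apply, zero_sub, norm_neg, norm_mul]
      have : ‖χ x‖ ≤ 1 := by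
        rw [Real.norm_eq_abs, abs_of_nonneg (h01 x).1]
        exact (h01 x).2
      nlinarith [norm_nonneg (g x)]
  refine (add_le_add hA hB).trans ?_
  rw [← ENNReal.ofReal_add hε2.le hε2.le, add_halves]

lemma conj_bound (hn : n ≠ 0) {q : ℝ≥0∞} (hq : (n : ℝ≥0∞) < q) :
    1 ≤ ENNReal.conjExponent q ∧
      ENNReal.conjExponent q < (n : ℝ≥0∞) / ((n : ℝ≥0∞) - 1) := by
  have hn1 : (1 : ℝ≥0∞) ≤ n := by exact_mod_cast Nat.one_le_iff_ne_zero.2 hn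
  refine ⟨by unfold ENNReal.conjExponent; exact le_self_add, ?_⟩
  unfold ENNReal.conjExponent
  have hlt : (n : ℝ≥0∞) - 1 < q - 1 := by
    rw [lt_tsub_iff_right, tsub_add_cancel_of_le hn1]
    exact hq
  have hinv : (q - 1)⁻¹ < ((n : ℝ≥0∞) - 1)⁻¹ := ENNReal.inv_lt_inv.2 hlt
  rcases eq_or_ne n 1 with rfl | hne
  · have : ((1 : ℕ) : ℝ≥0∞) / (((1 : ℕ) : ℝ≥0∞) - 1) = ⊤ := by
      simp
    rw [this]
    exact ENNReal.add_lt_top.2 ⟨by simp, hinv.trans_le le_top⟩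
  · have h0 : (n : ℝ≥0∞) - 1 ≠ 0 := by
      rw [Ne, tsub_eq_zero_iff_le, not_le]
      have : 1 < n := by omega
      exact_mod_cast this
    have ht : (n : ℝ≥0∞) - 1 ≠ ⊤ := ENNReal.sub_ne_top (by simp)
    have : (n : ℝ≥0∞) / ((n : ℝ≥0∞) - 1) = 1 + ((n : ℝ≥0∞) - 1)⁻¹ := by
      nth_rewrite 1 [← tsub_add_cancel_of_le hn1]
      rw [ENNReal.add_div, ENNReal.div_self h0 ht, one_div]
    rw [this]
    exact ENNReal.add_lt_add_left (by simp) hinv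

lemma integrable_inner_L2 {D : Set (Eu n)} {V W : Eu n → Eu n}
    (hV : MemLp V 2 (volume.restrict D)) (hW : MemLp W 2 (volume.restrict D)) :
    Integrable (fun x => ⟪V x, W x⟫) (volume.restrict D) := by
  refine (L2.integrable_inner (𝕜 := ℝ) (hV.toLp V) (hW.toLp W)).congr ?_
  filter_upwards [hV.coeFn_toLp, hW.coeFn_toLp] with x h1 h2
  rw [h1, h2]

/-- The pointwise estimate for the difference with a smooth problem. -/
lemma main_estimate {D : Set (Eu n)} (hD : IsOpen D) (hDb : IsBounded D) (hn : n ≠ 0)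
    {G : Eu n → Eu n → ℝ} (hG : IsGreenFunction D G)
    {x : Eu n} (hx : x ∈ D)
    (hGs : ContDiffOn ℝ (⊤ : ℕ∞) (G x) (D \ {x}))
    {p q : ℝ≥0∞} [hpq : ENNReal.HolderConjugate p q] (hq1 : 1 ≤ q) (hq : (n : ℝ≥0∞) < q)
    (hG1 : MemLp (G x) 1 (volume.restrict D)) (hGp : MemLp (G x) p (volume.restrict D))
    {f u : Eu n → ℝ} (hf : MemLp f q (volume.restrict D))
    (hu : MemW120 D u) (hweak : WeakLapEq D f u) (hucont : ContinuousOn u D) :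
    ∃ A : ℝ≥0∞, A ≠ ⊤ ∧ ∀ h, IsTestFun D h →
      ENNReal.ofReal |u x - ∫ y in D, G x y * f y|
        ≤ A * eLpNorm (fun x => f x - h x) q (volume.restrict D) := by
  have := finite_restrict hDb
  have hpar : ∀ δ : ℝ, 0 < δ → ∃ E R : Eu n → ℝ, MemLp E p ∧ IsParam δ E R := by
    intro δ hδ
    obtain ⟨E, R, h1, h2, h3, h4, h5, h6⟩ := exists_parametrix hD hx
      (fun φ hφ => green_test hG hφ hx) hG1 hGp hGs hδ
    exact ⟨E, R, h2, memLp_one_iff_integrable.1 h1, h3, h4, h5, h6⟩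
  obtain ⟨r, hr, hrs⟩ := Metric.isOpen_iff.1 hD x hx
  have hδ : 0 < r / 3 := by positivity
  obtain ⟨E, R, hEp, hP⟩ := hpar (r / 3) hδ
  have hb : ball x (3 * (r / 3)) ⊆ D := by
    rwa [mul_div_cancel₀ _ (by norm_num)]
  obtain ⟨C, hC, hen⟩ := energy hD hDb hn hq
  refine ⟨eLpNorm E p volume + C * eLpNorm R 2 volume + eLpNorm (G x) p (volume.restrict D),
    ?_, ?_⟩
  · exact ENNReal.add_ne_top.2 ⟨ENNReal.add_ne_top.2 ⟨hEp.2.ne,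
      ENNReal.mul_ne_top hC (hP.testR.memLp 2 volume).2.ne⟩, hGp.2.ne⟩
  intro h hh
  obtain ⟨w, hw, hww, hwc⟩ := smooth_solution hD hDb hn
    (fun δ hδ => let ⟨E, R, _, h⟩ := hpar δ hδ; ⟨E, R, h⟩) hh
  have hwx := hG h hh w hw hww hwc x hx
  have hhq := hh.memLp q (volume.restrict D)
  have hg : MemLp (fun x => f x - h x) q (volume.restrict D) := hf.sub hhq
  obtain ⟨hu2, hU2, huK⟩ := memW120_iff.1 hu
  obtain ⟨hw2, hW2, hwK⟩ := memW120_iff.1 hw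
  have hv : MemLp (fun x => u x - w x) 2 (volume.restrict D) := hu2.sub hw2
  have hV : MemLp (fun x => gradient u x - gradient w x) 2 (volume.restrict D) := hU2.sub hW2
  have hK : mkW hv hV ∈ KW D := (KW D).sub_mem huK hwK
  have hweakv : ∀ ψ, IsTestFun D ψ → ∫ x in D, ⟪gradient u x - gradient w x, gradient ψ x⟫
      = - ∫ x in D, (f x - h x) * ψ x := by
    intro ψ hψ
    simp only [inner_sub_left, sub_mul]
    have hψp := hψ.memLp p (volume.restrict D)
    have hpq' : ENNReal.HolderConjugate q p := hpq.symm
    have hi1 : Integrable (fun x => f x * ψ x) (volume.restrict D) := hf.integrable_mul hψp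
    have hi2 : Integrable (fun x => h x * ψ x) (volume.restrict D) := hhq.integrable_mul hψp
    rw [integral_sub (integrable_inner_L2 hU2 (hψ.memLp_gradient 2 _))
      (integrable_inner_L2 hW2 (hψ.memLp_gradient 2 _)),
      integral_sub hi1 hi2, hweak ψ hψ, hww ψ hψ]
    ring
  have hE := hen _ _ _ hg hv hV hK hweakv
  have hvi : Integrable (D.indicator fun x => u x - w x) :=
    (integrable_indicator_iff hD.measurableSet).2 (hv.integrable (by norm_num))
  have hgi : Integrable (D.indicator fun x => f x - h x) :=
    (integrable_indicator_iff hD.measurableSet).2 (hg.integrable hq1)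
  have hlb := local_bound hδ hP hEp hvi
    ((memLp_indicator_iff_restrict hD.measurableSet).2 hv) hgi
    ((memLp_indicator_iff_restrict hD.measurableSet).2 hg) (D := D) (x := x) (by
      intro φ hφ
      rw [indicator_mul_test hD, indicator_mul_test hD]
      have h1 := KW_ibp_lap hv hV hK hφ
      rw [hweakv φ hφ] at h1
      linarith) hb ((hucont.sub hwc).congr fun y hy => indicator_of_mem hy _)
  rw [eLpNorm_indicator_eq_eLpNorm_restrict hD.measurableSet,
    eLpNorm_indicator_eq_eLpNorm_restrict hD.measurableSet, indicator_of_mem hx] at hlb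
  have hho := holder_abs hGp hg
  have hsplit : u x - ∫ y in D, G x y * f y
      = (u x - w x) - ∫ y in D, G x y * (f y - h y) := by
    simp only [mul_sub]
    have hi1 : Integrable (fun y => G x y * f y) (volume.restrict D) := hGp.integrable_mul hf
    have hi2 : Integrable (fun y => G x y * h y) (volume.restrict D) := hGp.integrable_mul hhq
    rw [integral_sub hi1 hi2, ← hwx]
    ring
  rw [hsplit]
  calc ENNReal.ofReal |(u x - w x) - ∫ y in D, G x y * (f y - h y)|
      ≤ ENNReal.ofReal (|u x - w x| + |∫ y in D, G x y * (f y - h y)|) :=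
        ENNReal.ofReal_le_ofReal (abs_sub _ _)
    _ ≤ ENNReal.ofReal |u x - w x| + ENNReal.ofReal |∫ y in D, G x y * (f y - h y)| :=
        ENNReal.ofReal_add_le
    _ ≤ (eLpNorm E p volume * eLpNorm (fun x => f x - h x) q (volume.restrict D)
          + (C * eLpNorm (fun x => f x - h x) q (volume.restrict D)) * eLpNorm R 2 volume)
        + eLpNorm (G x) p (volume.restrict D)
          * eLpNorm (fun x => f x - h x) q (volume.restrict D) := by
        refine add_le_add (hlb.trans ?_) hho
        gcongr
    _ = _ := by ring

lemma main_finite {D : Set (Eu n)} (hD : IsOpen D) (hDb : IsBounded D) (hn : n ≠ 0)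
    {G : Eu n → Eu n → ℝ} (hG : IsGreenFunction D G)
    (hGW1p0 : ∀ x ∈ D, ∀ p : ℝ≥0∞, 1 ≤ p → p < (n : ℝ≥0∞) / ((n : ℝ≥0∞) - 1) →
      MemW1p0 D p (fun y => G x y))
    (hGsmooth : ContDiffOn ℝ (⊤ : ℕ∞)
      (fun p : Eu n × Eu n => G p.1 p.2) ((D ×ˢ D) \ {p | p.1 = p.2}))
    {q : ℝ≥0∞} (hqt : q ≠ ⊤) (hq : (n : ℝ≥0∞) < q)
    {f u : Eu n → ℝ} (hf : MemLp f q (volume.restrict D))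
    (hu : MemW120 D u) (hweak : WeakLapEq D f u) (hucont : ContinuousOn u D) :
    ∀ x ∈ D, u x = ∫ y in D, G x y * f y := by
  intro x hx
  have hq1 : 1 ≤ q := le_trans (by exact_mod_cast Nat.one_le_iff_ne_zero.2 hn) hq.le
  obtain ⟨hp1, hpn⟩ := conj_bound hn hq
  have hpq : ENNReal.HolderConjugate (ENNReal.conjExponent q) q :=
    (ENNReal.HolderConjugate.conjExponent hq1).symm
  have hGs : ContDiffOn ℝ (⊤ : ℕ∞) (G x) (D \ {x}) := by
    refine hGsmooth.comp (f := fun y => (x, y)) (contDiffOn_const.prodMk contDiffOn_id) ?_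
    rintro y ⟨hy, hyx⟩
    exact ⟨⟨hx, hy⟩, fun h => hyx (Eq.symm h)⟩
  obtain ⟨A, hA, hest⟩ := main_estimate hD hDb hn hG hx hGs hq1 hq
    (hGW1p0 x hx 1 le_rfl (hp1.trans_lt hpn)).1.1 (hGW1p0 x hx _ hp1 hpn).1.1 hf hu hweak hucont
  have key : |u x - ∫ y in D, G x y * f y| ≤ 0 := by
    refine le_of_forall_pos_le_add fun ε hε => ?_
    rw [zero_add]
    have hA1 : 0 < A.toReal + 1 := by positivity
    obtain ⟨h, hh, hhe⟩ := density hD hDb hq1 hqt hf (div_pos hε hA1)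
    have h1 := (hest h hh).trans (mul_le_mul_right hhe A)
    rw [← ENNReal.ofReal_toReal hA, ← ENNReal.ofReal_mul ENNReal.toReal_nonneg,
      ENNReal.ofReal_le_ofReal_iff (by positivity)] at h1
    refine h1.trans ?_
    rw [ENNReal.toReal_ofReal ENNReal.toReal_nonneg, mul_div_assoc', div_le_iff₀ hA1]
    nlinarith
  exact sub_eq_zero.1 (abs_nonpos_iff.1 key)

lemma main_zero {D : Set (Eu n)} (hn : n = 0)
    {G : Eu n → Eu n → ℝ} (hG : IsGreenFunction D G)
    {f u : Eu n → ℝ}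
    (hu : MemW120 D u) (hweak : WeakLapEq D f u) (hucont : ContinuousOn u D) :
    ∀ x ∈ D, u x = ∫ y in D, G x y * f y := by
  subst hn
  intro x hx
  have hDu : D = univ := by
    ext y
    simp [Subsingleton.elim y x, hx]
  refine hG f ⟨?_, ?_, ?_⟩ u hu hweak hucont x hx
  · rw [show f = fun _ => f x from funext fun y => by rw [Subsingleton.elim y x]]
    exact contDiff_const
  · exact HasCompactSupport.of_support_subset_isCompact isCompact_univ (subset_univ _)
  · rw [hDu]
    exact subset_univ _

/-- **Green's function representation for rough data** (Lemma 2.3): on a bounded connected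
Lipschitz domain `D`, if `f ∈ L^q(D)` with `q > n`, the (continuous representative of the)
weak solution `u ∈ W^{1,2}_0(D)` of `Δu = f` satisfies `u(x) = ∫_D G(x,y) f(y) dy` for all
`x ∈ D`. -/
theorem green_representation_rough_data
    (D : Set (EuclideanSpace ℝ (Fin n))) (hD : IsLipschitzDomain D) (hDconn : IsConnected D)
    (G : EuclideanSpace ℝ (Fin n) → EuclideanSpace ℝ (Fin n) → ℝ)
    (hG : IsGreenFunction D G)
    (hGW1p0 : ∀ x ∈ D, ∀ p : ℝ≥0∞, 1 ≤ p → p < (n : ℝ≥0∞) / ((n : ℝ≥0∞) - 1) →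
      MemW1p0 D p (fun y => G x y))
    (hGsym : ∀ x ∈ D, ∀ y ∈ D, x ≠ y → G x y = G y x)
    (hGsmooth : ContDiffOn ℝ (⊤ : ℕ∞)
      (fun p : EuclideanSpace ℝ (Fin n) × EuclideanSpace ℝ (Fin n) => G p.1 p.2)
      ((D ×ˢ D) \ {p | p.1 = p.2}))
    (q : ℝ≥0∞) (hq : (n : ℝ≥0∞) < q)
    (f u : EuclideanSpace ℝ (Fin n) → ℝ)
    (hf : MemLp f q (volume.restrict D))
    (hu : MemW120 D u) (hweak : WeakLapEq D f u) (hucont : ContinuousOn u D) :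
    ∀ x ∈ D, u x = ∫ y in D, G x y * f y := by
  rcases eq_or_ne n 0 with hn | hn
  · exact main_zero hn hG hu hweak hucont
  · rcases eq_or_ne q ⊤ with hqt | hqt
    · have := finite_restrict hD.2.1
      refine main_finite hD.1 hD.2.1 hn hG hGW1p0 hGsmooth (q := (n : ℝ≥0∞) + 1) (by simp)
        (ENNReal.lt_add_right (by simp) (by simp))
        (hf.mono_exponent (by rw [hqt]; exact le_top)) hu hweak hucont
    · exact main_finite hD.1 hD.2.1 hn hG hGW1p0 hGsmooth hqt hq hf hu hweak hucont
end
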